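/- Let G be a simple graph on [n] with no isolated vertex such that I = I(G) has almost maximal finite index. Then the depth of I as an S-module satisfies 3 ≤ depth(I) ≤ 4, where S = K[x_1,...,x_n]. -/

import Mathlib

open Finsupp

namespace EP

variable (K : Type) [Field K]

/-! ## Simplicial chains over a linearly ordered vertex set -/

variable {V : Type} [Fintype V] [DecidableEq V] [LinearOrder V]

/-- Boundary of a single (oriented) face, given as a finset. -/
noncomputable def bdFace (s : Finset V) : Finset V →₀ K :=
  ∑ v ∈ s, ((-1 : K) ^ ((s.filter (fun w => w < v)).card)) • Finsupp.single (s.erase v) 1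

/-- The simplicial boundary map on the free module on all finsets of vertices
(the augmented oriented chain complex, with the empty set playing the role of
the `(-1)`-dimensional face). -/
noncomputable def bdS : (Finset V →₀ K) →ₗ[K] (Finset V →₀ K) :=
  Finsupp.lsum K fun s => LinearMap.toSpanSingleton K (Finset V →₀ K) (bdFace K s)

/-- Chains supported on faces of a complex `Δ` having `k` vertices. -/
noncomputable def faceSpan (Δ : Set (Finset V)) (k : ℕ) : Submodule K (Finset V →₀ K) :=
  Submodule.span K {c | ∃ F ∈ Δ, F.card = k ∧ c = Finsupp.single F 1}

/-- Dimension of the `d`-th reduced simplicial homology of `Δ` over `K`. -/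
noncomputable def redHomRank (Δ : Set (Finset V)) (d : ℕ) : ℕ :=
  Module.finrank K ↥(faceSpan K Δ (d+1) ⊓ LinearMap.ker (bdS K)) -
    Module.finrank K
      ↥(Submodule.map (bdS K) (faceSpan K Δ (d+2)) ⊓
          (faceSpan K Δ (d+1) ⊓ LinearMap.ker (bdS K)))

/-- The flag complex of a graph: faces are the cliques. -/
def flagComplex (G : SimpleGraph V) : Set (Finset V) :=
  {F | ∀ i ∈ F, ∀ j ∈ F, i ≠ j → G.Adj i j}

/-- The flag complex of the induced subgraph of `G` on `W`. -/
def flagComplexOn (G : SimpleGraph V) (W : Finset V) : Set (Finset V) :=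
  {F | (F : Set V) ⊆ (W : Set V) ∧ ∀ i ∈ F, ∀ j ∈ F, i ≠ j → G.Adj i j}

/-- The induced subcomplex of `Δ` on a vertex subset `W`. -/
def restrictComplex (Δ : Set (Finset V)) (W : Finset V) : Set (Finset V) :=
  {F | F ∈ Δ ∧ F ⊆ W}

/-- The oriented `1`-chain `[a,b]` (so `[a,b] = -[b,a]`). -/
noncomputable def edgeChain (a b : V) : Finset V →₀ K :=
  if a < b then Finsupp.single {a, b} 1 else -Finsupp.single {a, b} 1

/-- The oriented `2`-chain `[x,y,z]`, antisymmetric under transpositions. -/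
noncomputable def triChain (x y z : V) : Finset V →₀ K :=
  if (x < y ∧ y < z) ∨ (y < z ∧ z < x) ∨ (z < x ∧ x < y)
  then Finsupp.single {x, y, z} 1
  else -Finsupp.single {x, y, z} 1

/-! ## Graded Betti numbers of monomial ideals via the Taylor complex -/

variable {n : ℕ}

/-- The multidegree lcm of the monomial generators indexed by `S`. -/
def mlcm {r : ℕ} (g : Fin r → (Fin n → ℕ)) (S : Finset (Fin r)) : Fin n → ℕ :=
  fun x => S.sup fun k => g k x

/-- The differential of the Taylor complex tensored with the residue field `K`. -/
noncomputable def bdT {r : ℕ} (g : Fin r → (Fin n → ℕ)) :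
    (Finset (Fin r) →₀ K) →ₗ[K] (Finset (Fin r) →₀ K) :=
  Finsupp.lsum K fun S => LinearMap.toSpanSingleton K (Finset (Fin r) →₀ K)
    (∑ k ∈ S, if mlcm g (S.erase k) = mlcm g S
      then ((-1 : K) ^ ((S.filter (fun j => j < k)).card)) • Finsupp.single (S.erase k) (1 : K)
      else 0)

/-- The degree-`j` strand of the Taylor complex in homological degree `p`. -/
noncomputable def strand {r : ℕ} (g : Fin r → (Fin n → ℕ)) (p j : ℕ) :
    Submodule K (Finset (Fin r) →₀ K) :=
  Submodule.span K
    {c | ∃ S : Finset (Fin r), S.card = p ∧ (∑ x, mlcm g S x) = j ∧ c = Finsupp.single S 1}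

/-- `dim_K Tor_p(S/I, K)_j`, computed from the Taylor complex on the monomial
generators `g` of `I`. -/
noncomputable def torRank {r : ℕ} (g : Fin r → (Fin n → ℕ)) (p j : ℕ) : ℕ :=
  Module.finrank K ↥(strand K g p j ⊓ LinearMap.ker (bdT K g)) -
    Module.finrank K
      ↥(Submodule.map (bdT K g) (strand K g (p+1) j) ⊓
          (strand K g p j ⊓ LinearMap.ker (bdT K g)))

/-- The graded Betti number `β_{i,j}(I)` of the monomial ideal `I` generated by
the monomials with exponent vectors `g`, i.e. `dim_K Tor_i(I, K)_j = dim_K Tor_{i+1}(S/I, K)_j`. -/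
noncomputable def betti {r : ℕ} (g : Fin r → (Fin n → ℕ)) (i j : ℕ) : ℕ :=
  torRank K g (i+1) j

/-- The monomial with exponent vector `a`. -/
noncomputable def mono (a : Fin n → ℕ) : MvPolynomial (Fin n) K :=
  MvPolynomial.monomial (Finsupp.equivFunOnFinite.symm a) 1

/-- `g` is a list of exponent vectors of monomials generating the ideal `I`. -/
def IsGenSet {r : ℕ} (g : Fin r → (Fin n → ℕ)) (I : Ideal (MvPolynomial (Fin n) K)) : Prop :=
  Ideal.span (Set.range fun k => mono K (g k)) = I

/-- The ideal (generated by the monomials with exponent vectors `g`) has a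
`d`-linear resolution. -/
def HasLinRes {r : ℕ} (g : Fin r → (Fin n → ℕ)) (d : ℕ) : Prop :=
  ∀ i j, betti K g i j ≠ 0 → j = i + d

/-- Castelnuovo–Mumford regularity of a monomial ideal, from its Betti numbers. -/
noncomputable def regT {r : ℕ} (g : Fin r → (Fin n → ℕ)) : ℕ :=
  sSup {d | ∃ i j, betti K g i j ≠ 0 ∧ j = i + d}

/-! ## Edge ideals -/

/-- The edge ideal of a simple graph. -/
noncomputable def edgeIdeal (G : SimpleGraph (Fin n)) : Ideal (MvPolynomial (Fin n) K) :=
  Ideal.span {m | ∃ i j : Fin n, G.Adj i j ∧ m = MvPolynomial.X i * MvPolynomial.X j}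

/-- The edge set of `G` as a finset. -/
noncomputable def edgeFins (G : SimpleGraph (Fin n)) : Finset (Sym2 (Fin n)) :=
  letI : Fintype ↥G.edgeSet := Fintype.ofFinite _
  G.edgeFinset

/-- The canonical monomial (exponent vector) generators of the edge ideal of `G`. -/
noncomputable def edgeGens (G : SimpleGraph (Fin n)) : Fin (edgeFins G).card → (Fin n → ℕ) :=
  fun k x => if x ∈ ((edgeFins G).equivFin.symm k : Sym2 (Fin n)) then 1 else 0

/-- The graded Betti numbers `β_{i,j}(I(G))` of the edge ideal of `G` over `K`. -/
noncomputable def gBetti (G : SimpleGraph (Fin n)) (i j : ℕ) : ℕ :=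
  betti K (edgeGens G) i j

/-- The projective dimension `pd(I(G))` of the edge ideal of `G` over `K`. -/
noncomputable def gPd (G : SimpleGraph (Fin n)) : ℕ :=
  sSup {i | ∃ j, gBetti K G i j ≠ 0}

/-- The Green–Lazarsfeld index of the edge ideal of `G` over `K`
(`⊤` iff the ideal has a linear resolution). -/
noncomputable def gIndex (G : SimpleGraph (Fin n)) : ℕ∞ :=
  sInf {N : ℕ∞ | ∃ i j : ℕ, N = (i : ℕ∞) ∧ i + 2 < j ∧ gBetti K G i j ≠ 0}

/-- The regularity of the edge ideal of `G` over `K`. -/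
noncomputable def gReg (G : SimpleGraph (Fin n)) : ℕ :=
  sSup {d | ∃ i j, gBetti K G i j ≠ 0 ∧ j = i + d}

/-- The edge ideal of `G` has a (2-)linear resolution over `K`. -/
def gLinRes (G : SimpleGraph (Fin n)) : Prop :=
  ∀ i j, gBetti K G i j ≠ 0 → j = i + 2

/-- The edge ideal of `G` has almost maximal finite index over `K`:
`index(I(G)) = pd(I(G)) - 1` (with the index finite). -/
def AMFI (G : SimpleGraph (Fin n)) : Prop :=
  gIndex K G + 1 = (gPd K G : ℕ∞)

/-! ## Graph-theoretic notions -/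

/-- `H` contains an induced (chordless) cycle of length `l`. -/
def HasInducedCycle {W : Type} (H : SimpleGraph W) (l : ℕ) : Prop :=
  ∃ f : ZMod l → W, Function.Injective f ∧
    ∀ i j : ZMod l, H.Adj (f i) (f j) ↔ (j = i + 1 ∨ i = j + 1)

/-- `H` is chordal: it has no induced cycle of length greater than `3`. -/
def Chordal {W : Type} (H : SimpleGraph W) : Prop :=
  ∀ l : ℕ, 3 < l → ¬ HasInducedCycle H l

end EP

/-! In the Taylor complex, the strand of degree `j` splits over the vertex sets `W` with `#W = j`
into the complexes of edge families with union exactly `W`. In the incidence graph of vertices and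
edges these are the independent sets containing `Wᶜ` and dominating `W`. As the independent sets
failing to dominate a fixed independent set form an acyclic family, the condition of dominating `W`
may be traded for that of dominating all edges; what is left are the transversals containing `Wᶜ`,
that is, the complements of the cliques of `H = Gᶜ` inside `W`. So `β_{i,j}(I(G)) ≠ 0` exactly when
the clique complex of some `H[W]` with `#W = j` has nonzero reduced cohomology in degree `c - 1`,
where `c = j - i - 1`.

Let `p` be the projective dimension. Almost maximal finite index gives `p + c ≤ #W` for all such `W`
with `c ≥ 2`, with equality for some `C` with `c = 2`, and `#W ≤ p + c + 1` for every `c`.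
Minimality of `C` makes the clique complex of `H[C]` connected and `H[C]` triangle-free.
Connectedness excludes `n = p + 2`, as the projective dimension would then have to be realised by
`C` with `c = 1`.

Suppose `n ≥ p + 5`. Adding vertices and suspending, within the two bounds, shows that all vertices
outside `C` except for one, `x`, are joined in `H` to everything but `x`; here one uses that no
vertex of `H` is joined to all others, as `G` has no isolated vertex. Then the neighbours of `x`
form a clique inside `C`, with at least three elements by the second bound: a triangle in `H[C]`. -/

namespace EP

open scoped Finset

section Chains

variable {α : Type*} (R : Type*) [CommRing R]

/-- The chains of degree `q` supported on the family `F`, the degree of a face being its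
cardinality. The degree is an integer so that it can be shifted freely. -/
def chains (F : Set (Finset α)) (q : ℤ) : Submodule R (Finset α → R) where
  carrier := {f | ∀ S, f S ≠ 0 → S ∈ F ∧ (#S : ℤ) = q}
  zero_mem' S h := absurd rfl h
  add_mem' {f g} hf hg S h := by
    by_cases hfS : f S = 0
    · exact hg S fun hgS => h (by rw [Pi.add_apply, hfS, hgS, add_zero])
    · exact hf S hfS
  smul_mem' c f hf S h := hf S fun hfS => h (by rw [Pi.smul_apply, hfS, smul_zero])

variable {R} {F G A : Set (Finset α)} {q : ℤ} {f : Finset α → R}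

lemma chains_mono (h : F ⊆ G) : chains R F q ≤ chains R G q :=
  fun _ hf S hS => (hf S hS).imp_left (@h S)

lemma eq_zero_of_notMem (hf : f ∈ chains R F q) {S : Finset α} (hS : S ∉ F) : f S = 0 :=
  by_contra fun h => hS (hf S h).1

lemma indicator_mem_chains (hf : f ∈ chains R F q) : A.indicator f ∈ chains R (F ∩ A) q := by
  intro S hS
  have hSA := Set.mem_of_indicator_ne_zero hS
  rw [Set.indicator_of_mem hSA] at hS
  exact ⟨⟨(hf S hS).1, hSA⟩, (hf S hS).2⟩

end Chains

section Boundary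

variable {α : Type*} [LinearOrder α] (R : Type*) [CommRing R]

/-- The incidence coefficient of `insert a S` and its facet `S`, where `a ∉ S`. -/
def incidenceSign (a : α) (S : Finset α) : R :=
  (-1) ^ #{b ∈ S | b < a}

lemma incidenceSign_mul_self (a : α) (S : Finset α) :
    incidenceSign R a S * incidenceSign R a S = 1 := by
  rw [incidenceSign, ← mul_pow, neg_one_mul, neg_neg, one_pow]

lemma incidenceSign_insert {a b : α} {S : Finset α} (hb : b ∉ S) :
    incidenceSign R a (insert b S) = (if b < a then -1 else 1) * incidenceSign R a S := by
  unfold incidenceSign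
  rw [Finset.filter_insert]
  split_ifs
  · rw [Finset.card_insert_of_notMem (by simp [hb]), pow_succ']
  · rw [one_mul]

lemma incidenceSign_swap {a b : α} {S : Finset α} (ha : a ∉ S) (hb : b ∉ S) (hab : a ≠ b) :
    incidenceSign R a S * incidenceSign R b (insert a S) =
      -(incidenceSign R b S * incidenceSign R a (insert b S)) := by
  rw [incidenceSign_insert R ha, incidenceSign_insert R hb]
  rcases hab.lt_or_gt with h | h
  · rw [if_pos h, if_neg h.not_gt]; ring
  · rw [if_neg h.not_gt, if_pos h]; ring

lemma incidenceSign_insert_mul_insert {a b : α} {S : Finset α} (ha : a ∉ S) (hb : b ∉ S)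
    (hab : a ≠ b) :
    incidenceSign R a (insert b S) * incidenceSign R b (insert a S) =
      -(incidenceSign R b S * incidenceSign R a S) := by
  rw [incidenceSign_insert R ha, incidenceSign_insert R hb]
  rcases hab.lt_or_gt with h | h
  · rw [if_pos h, if_neg h.not_gt]; ring
  · rw [if_neg h.not_gt, if_pos h]; ring

/-- The homotopy operator adjoining the vertex `v` to every face of a chain. -/
def coneMap (v : α) (f : Finset α → R) (S : Finset α) : R :=
  if v ∈ S then incidenceSign R v (S.erase v) * f (S.erase v) else 0

lemma coneMap_insert {v : α} {S : Finset α} (hv : v ∉ S) (f : Finset α → R) :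
    coneMap R v f (insert v S) = incidenceSign R v S * f S := by
  rw [coneMap, if_pos (Finset.mem_insert_self v S), Finset.erase_insert hv]

lemma coneMap_of_notMem {v : α} {S : Finset α} (hv : v ∉ S) (f : Finset α → R) :
    coneMap R v f S = 0 :=
  if_neg hv

variable [Fintype α]

/-- The boundary map of the full simplex on `α`, with a chain encoded by its coefficient function
on all finite sets of vertices; the empty set is a face. -/
def boundary : (Finset α → R) →ₗ[R] (Finset α → R) where
  toFun f T := ∑ a ∈ Tᶜ, incidenceSign R a T * f (insert a T)
  map_add' f g := by
    ext T
    simp only [Pi.add_apply, mul_add, Finset.sum_add_distrib]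
  map_smul' c f := by
    ext T
    simp only [Pi.smul_apply, smul_eq_mul, RingHom.id_apply, Finset.mul_sum, mul_left_comm]

variable {R}

lemma boundary_apply (f : Finset α → R) (T : Finset α) :
    boundary R f T = ∑ a ∈ Tᶜ, incidenceSign R a T * f (insert a T) := rfl

lemma boundary_congr {f g : Finset α → R} {T : Finset α}
    (h : ∀ a ∉ T, f (insert a T) = g (insert a T)) : boundary R f T = boundary R g T :=
  Finset.sum_congr rfl fun a ha => by rw [h a (Finset.mem_compl.1 ha)]

lemma exists_ne_zero_of_boundary_ne_zero {f : Finset α → R} {T : Finset α}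
    (h : boundary R f T ≠ 0) : ∃ a ∉ T, f (insert a T) ≠ 0 := by
  by_contra! hf
  exact h (Finset.sum_eq_zero fun a ha => by rw [hf a (Finset.mem_compl.1 ha), mul_zero])

lemma boundary_apply_of_forall_ne {f : Finset α → R} {a : α} {T : Finset α} (ha : a ∉ T)
    (hf : ∀ b ∉ T, b ≠ a → f (insert b T) = 0) :
    boundary R f T = incidenceSign R a T * f (insert a T) := by
  rw [boundary_apply, Finset.sum_eq_single_of_mem a (Finset.mem_compl.2 ha)]
  exact fun b hb hba => by rw [hf b (Finset.mem_compl.1 hb) hba, mul_zero]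

lemma boundary_boundary (f : Finset α → R) : boundary R (boundary R f) = 0 := by
  ext T
  simp only [boundary_apply, Finset.mul_sum, ← mul_assoc, Pi.zero_apply]
  rw [Finset.sum_sigma']
  refine Finset.sum_involution (fun x _ => ⟨x.2, x.1⟩) ?_ ?_ ?_ fun _ _ => rfl
  · rintro ⟨a, b⟩ h
    simp only [Finset.mem_sigma, Finset.mem_compl, Finset.mem_insert, not_or] at h ⊢
    rw [incidenceSign_swap R h.1 h.2.2 (Ne.symm h.2.1), Finset.insert_comm]
    ring
  · rintro ⟨a, b⟩ h - heq
    simp only [Finset.mem_sigma, Finset.mem_compl, Finset.mem_insert, not_or] at h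
    exact h.2.1 (congrArg Sigma.fst heq)
  · rintro ⟨a, b⟩ h
    simp only [Finset.mem_sigma, Finset.mem_compl, Finset.mem_insert, not_or] at h ⊢
    exact ⟨h.2.2, Ne.symm h.2.1, h.1⟩

lemma boundary_indicator {A : Set (Finset α)} (hA : IsUpperSet A) (f : Finset α → R)
    {T : Finset α} (hT : T ∈ A) : boundary R (A.indicator f) T = boundary R f T :=
  boundary_congr fun a _ => Set.indicator_of_mem (hA (Finset.subset_insert a T) hT) f

variable {F G A : Set (Finset α)} {q : ℤ} {f : Finset α → R}

lemma card_of_boundary_ne_zero (hf : f ∈ chains R F q) {T : Finset α}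
    (hT : boundary R f T ≠ 0) : (#T : ℤ) + 1 = q := by
  obtain ⟨a, ha, h⟩ := exists_ne_zero_of_boundary_ne_zero hT
  rw [← (hf _ h).2, Finset.card_insert_of_notMem ha, Nat.cast_succ]

lemma indicator_boundary_mem_chains (hf : f ∈ chains R G (q + 1)) :
    F.indicator (boundary R f) ∈ chains R F q := by
  intro S hS
  have hSF := Set.mem_of_indicator_ne_zero hS
  rw [Set.indicator_of_mem hSF] at hS
  exact ⟨hSF, add_right_cancel (card_of_boundary_ne_zero hf hS)⟩

lemma boundary_indicator_boundary (hF : F.OrdConnected) (hf : f ∈ chains R F q)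
    {T : Finset α} (hT : T ∈ F) : boundary R (F.indicator (boundary R f)) T = 0 := by
  refine Eq.trans (boundary_congr fun a _ => ?_) (congrFun (boundary_boundary f) T)
  refine Set.indicator_apply_eq_self.2 fun haT => ?_
  by_contra h
  obtain ⟨b, -, hb⟩ := exists_ne_zero_of_boundary_ne_zero h
  exact haT (hF.out hT (hf _ hb).1 ⟨Finset.subset_insert a T, Finset.subset_insert b _⟩)

lemma boundary_eq_zero_of_mem_chains_diff (hA : IsUpperSet A) (hf : f ∈ chains R (F \ A) q)
    {T : Finset α} (hT : T ∈ A) : boundary R f T = 0 := by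
  by_contra h
  obtain ⟨a, -, ha⟩ := exists_ne_zero_of_boundary_ne_zero h
  exact (hf _ ha).1.2 (hA (Finset.subset_insert a T) hT)

variable (R) in
/-- Exactness in degree `q` of the complex of chains supported on `F`, whose differential is the
boundary followed by restriction to `F`. This is a complex when `F` is order connected, i.e. a
difference of two simplicial complexes. -/
def Acyclic (F : Set (Finset α)) (q : ℤ) : Prop :=
  ∀ f ∈ chains R F q, (∀ T ∈ F, boundary R f T = 0) →
    ∃ e ∈ chains R F (q + 1), ∀ T ∈ F, boundary R e T = f T

lemma acyclic_of_forall_card_ne (h : ∀ S ∈ F, (#S : ℤ) ≠ q) : Acyclic R F q := by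
  intro f hf _
  refine ⟨0, zero_mem _, fun T _ => ?_⟩
  rw [map_zero, Pi.zero_apply]
  by_contra hT
  exact h T (hf T (Ne.symm hT)).1 (hf T (Ne.symm hT)).2

/-! ### The long exact sequence of a family cut by an upper set -/

lemma Acyclic.of_diff_of_inter (hF : F.OrdConnected) (hA : IsUpperSet A)
    (hL : Acyclic R (F \ A) q) (hU : Acyclic R (F ∩ A) q) : Acyclic R F q := by
  intro f hf hcycle
  obtain ⟨e, he, hef⟩ := hU (A.indicator f) (indicator_mem_chains hf) fun T hT => by
    rw [boundary_indicator hA f hT.2, hcycle T hT.1]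
  have heF : e ∈ chains R F (q + 1) := chains_mono Set.inter_subset_left he
  have hdiff : f - F.indicator (boundary R e) ∈ chains R (F \ A) q := by
    intro S hS
    have hSF := sub_mem hf (indicator_boundary_mem_chains heF) S hS
    refine ⟨⟨hSF.1, fun hSA => hS ?_⟩, hSF.2⟩
    rw [Pi.sub_apply, Set.indicator_of_mem hSF.1, hef S ⟨hSF.1, hSA⟩, Set.indicator_of_mem hSA,
      sub_self]
  obtain ⟨e', he', hef'⟩ := hL _ hdiff fun T hT => by
    rw [map_sub, Pi.sub_apply, hcycle T hT.1, boundary_indicator_boundary hF heF hT.1, sub_zero]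
  refine ⟨e + e', add_mem heF (chains_mono Set.sdiff_subset he'), fun T hT => ?_⟩
  rw [map_add, Pi.add_apply]
  by_cases hTA : T ∈ A
  · rw [hef T ⟨hT, hTA⟩, boundary_eq_zero_of_mem_chains_diff hA he' hTA,
      Set.indicator_of_mem hTA, add_zero]
  · rw [hef' T ⟨hT, hTA⟩, Pi.sub_apply, Set.indicator_of_mem hT, add_sub_cancel]

lemma Acyclic.diff (hF : F.OrdConnected) (hA : IsUpperSet A)
    (h : Acyclic R F q) (hU : Acyclic R (F ∩ A) (q + 1)) : Acyclic R (F \ A) q := by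
  intro f hf hcycle
  obtain ⟨e, he, hef⟩ := h f (chains_mono Set.sdiff_subset hf) fun T hT => by
    by_cases hTA : T ∈ A
    · exact boundary_eq_zero_of_mem_chains_diff hA hf hTA
    · exact hcycle T ⟨hT, hTA⟩
  obtain ⟨g, hg, hge⟩ := hU (A.indicator e) (indicator_mem_chains he) fun T hT => by
    rw [boundary_indicator hA e hT.2, hef T hT.1, eq_zero_of_notMem hf fun h => h.2 hT.2]
  have hgF : g ∈ chains R F (q + 1 + 1) := chains_mono Set.inter_subset_left hg
  refine ⟨e - F.indicator (boundary R g), ?_, fun T hT => ?_⟩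
  · intro S hS
    have hSF := sub_mem he (indicator_boundary_mem_chains hgF) S hS
    refine ⟨⟨hSF.1, fun hSA => hS ?_⟩, hSF.2⟩
    rw [Pi.sub_apply, Set.indicator_of_mem hSF.1, hge S ⟨hSF.1, hSA⟩, Set.indicator_of_mem hSA,
      sub_self]
  · rw [map_sub, Pi.sub_apply, hef T hT.1, boundary_indicator_boundary hF hgF hT.1, sub_zero]

lemma Acyclic.inter (hF : F.OrdConnected) (hA : IsUpperSet A)
    (h : Acyclic R F q) (hL : Acyclic R (F \ A) (q - 1)) : Acyclic R (F ∩ A) q := by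
  intro f hf hcycle
  have hfF : f ∈ chains R F (q - 1 + 1) := by
    rw [sub_add_cancel]; exact chains_mono Set.inter_subset_left hf
  have hlow : F.indicator (boundary R f) ∈ chains R (F \ A) (q - 1) := by
    intro S hS
    have hSF := indicator_boundary_mem_chains hfF S hS
    refine ⟨⟨hSF.1, fun hSA => hS ?_⟩, hSF.2⟩
    rw [Set.indicator_of_mem hSF.1, hcycle S ⟨hSF.1, hSA⟩]
  obtain ⟨e, he, hef⟩ := hL _ hlow fun T hT => boundary_indicator_boundary hF hfF hT.1
  rw [sub_add_cancel] at he
  obtain ⟨g, hg, hgf⟩ := h (f - e)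
      (sub_mem (chains_mono Set.inter_subset_left hf) (chains_mono Set.sdiff_subset he))
      fun T hT => by
    rw [map_sub, Pi.sub_apply, sub_eq_zero]
    by_cases hTA : T ∈ A
    · rw [hcycle T ⟨hT, hTA⟩, boundary_eq_zero_of_mem_chains_diff hA he hTA]
    · rw [hef T ⟨hT, hTA⟩, Set.indicator_of_mem hT]
  refine ⟨A.indicator g, indicator_mem_chains hg, fun T hT => ?_⟩
  rw [boundary_indicator hA g hT.2, hgf T hT.1, Pi.sub_apply,
    eq_zero_of_notMem he fun h => h.2 hT.2, sub_zero]

/-! ### Cones -/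

lemma boundary_coneMap_of_notMem {v : α} {T : Finset α} (hv : v ∉ T) (f : Finset α → R) :
    boundary R (coneMap R v f) T = f T := by
  rw [boundary_apply_of_forall_ne hv fun a _ hav =>
      coneMap_of_notMem R (by simp [hv, hav.symm]) f,
    coneMap_insert R hv, ← mul_assoc, incidenceSign_mul_self, one_mul]

lemma boundary_coneMap_insert {v : α} {T : Finset α} (hv : v ∉ T) (f : Finset α → R) :
    boundary R (coneMap R v f) (insert v T) =
      f (insert v T) - incidenceSign R v T * boundary R f T := by
  have hcompl : Tᶜ = insert v (insert v T)ᶜ := by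
    ext a; by_cases h : a = v <;> simp [h, hv]
  rw [boundary_apply f T, hcompl, Finset.sum_insert (by simp), mul_add, ← mul_assoc,
    incidenceSign_mul_self, one_mul, sub_add_cancel_left, Finset.mul_sum, ← Finset.sum_neg_distrib,
    boundary_apply]
  refine Finset.sum_congr rfl fun a ha => ?_
  obtain ⟨hav, haT⟩ : a ≠ v ∧ a ∉ T := by simpa using ha
  rw [Finset.insert_comm, coneMap_insert R (by simp [hv, hav.symm]), ← mul_assoc,
    incidenceSign_insert_mul_insert R haT hv hav]
  ring

lemma acyclic_of_cone (v : α) (hinsert : ∀ S ∈ F, insert v S ∈ F) (herase : ∀ S ∈ F, S.erase v ∈ F)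
    (q : ℤ) : Acyclic R F q := by
  intro f hf hcycle
  refine ⟨coneMap R v f, fun S hS => ?_, fun T hT => ?_⟩
  · have hv : v ∈ S := by_contra fun hv => hS (coneMap_of_notMem R hv f)
    rw [coneMap, if_pos hv] at hS
    obtain ⟨hmem, hcard⟩ := hf _ (right_ne_zero_of_mul hS)
    refine ⟨Finset.insert_erase hv ▸ hinsert _ hmem, ?_⟩
    rw [← hcard, ← Finset.card_erase_add_one hv, Nat.cast_succ]
  · by_cases hv : v ∈ T
    · have hcyc := hcycle _ (herase T hT)
      rw [← Finset.insert_erase hv, boundary_coneMap_insert (Finset.notMem_erase v T), hcyc,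
        mul_zero, sub_zero]
    · exact boundary_coneMap_of_notMem hv f

lemma acyclic_adjoin_iff {L : Set (Finset α)} (hL : L.OrdConnected) {v : α}
    (hv : ∀ S ∈ L, v ∉ S) (q : ℤ) :
    Acyclic R {S | v ∈ S ∧ S.erase v ∈ L} (q + 1) ↔ Acyclic R L q := by
  let P : Set (Finset α) := {S | S.erase v ∈ L}
  let A : Set (Finset α) := {S | v ∈ S}
  have hA : IsUpperSet A := fun S T hST hS => hST hS
  have hP : P.OrdConnected := hL.preimage_mono fun S T h => Finset.erase_subset_erase v h
  have hcone : ∀ q, Acyclic R P q := acyclic_of_cone v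
    (fun S hS => by simpa only [P, Set.mem_ofPred_eq, Finset.erase_insert_eq_erase] using hS)
    (fun S hS => by simpa only [P, Set.mem_ofPred_eq, Finset.erase_idem] using hS)
  have hinter : P ∩ A = {S | v ∈ S ∧ S.erase v ∈ L} := Set.inter_comm P A
  have hdiff : P \ A = L := by
    ext S
    by_cases hS : v ∈ S
    · exact iff_of_false (fun h => h.2 hS) fun h => hv S h hS
    · simp only [P, A, Set.mem_sdiff, Set.mem_ofPred_eq, hS, not_false_eq_true, and_true,
        Finset.erase_eq_of_notMem]
  rw [← hinter, ← hdiff]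
  exact ⟨(hcone q).diff hP hA,
    fun h => (hcone (q + 1)).inter hP hA (by rwa [add_sub_cancel_right])⟩

end Boundary

/-! ### Transport along an order embedding -/

section Transport

variable {α β : Type*} [LinearOrder α] [LinearOrder β] {R : Type*} [CommRing R] {ι : β ↪o α}
  {M : Finset α} {F : Set (Finset β)} {q : ℤ} {f : Finset α → R}

variable (ι M) in
/-- The image of a face under an order embedding, joined with a fixed face `M`. -/
def mapUnion (T : Finset β) : Finset α := T.map ι.toEmbedding ∪ M

lemma apply_mem_mapUnion (hM : ∀ k, ∀ m ∈ M, ι k < m) {T : Finset β} {k : β} :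
    ι k ∈ mapUnion ι M T ↔ k ∈ T := by
  have hk : ι k ∉ M := fun h => (hM k _ h).false
  simp [mapUnion, hk]

lemma mapUnion_insert (k : β) (T : Finset β) :
    mapUnion ι M (insert k T) = insert (ι k) (mapUnion ι M T) := by
  simp [mapUnion, Finset.map_insert, Finset.insert_union]

lemma mapUnion_injective (hM : ∀ k, ∀ m ∈ M, ι k < m) : Function.Injective (mapUnion ι M) :=
  fun S T h => Finset.ext fun k => by
    rw [← apply_mem_mapUnion hM, h, apply_mem_mapUnion hM]

lemma card_mapUnion (hM : ∀ k, ∀ m ∈ M, ι k < m) (T : Finset β) :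
    #(mapUnion ι M T) = #T + #M := by
  rw [mapUnion, Finset.card_union_of_disjoint, Finset.card_map]
  simp only [Finset.disjoint_left, Finset.mem_map]
  rintro _ ⟨k, -, rfl⟩ hk
  exact (hM k _ hk).false

lemma incidenceSign_mapUnion (hM : ∀ k, ∀ m ∈ M, ι k < m) (k : β) (T : Finset β) :
    incidenceSign R (ι k) (mapUnion ι M T) = incidenceSign R k T := by
  rw [incidenceSign, incidenceSign, ← Finset.card_map ι.toEmbedding, mapUnion,
    Finset.filter_union, Finset.filter_map,
    Finset.filter_false_of_mem fun m hm => (hM k m hm).not_gt,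
    Finset.union_empty]
  simp only [Function.comp_def, RelEmbedding.coe_toEmbedding, ι.lt_iff_lt]

lemma comp_mapUnion_mem_chains (hM : ∀ k, ∀ m ∈ M, ι k < m)
    (hf : f ∈ chains R (mapUnion ι M '' F) (q + #M)) : f ∘ mapUnion ι M ∈ chains R F q := by
  intro S hS
  obtain ⟨hmem, hcard⟩ := hf _ hS
  rw [card_mapUnion hM, Nat.cast_add] at hcard
  exact ⟨(mapUnion_injective hM).mem_set_image.1 hmem, add_right_cancel hcard⟩

lemma extend_mapUnion_mem_chains (hM : ∀ k, ∀ m ∈ M, ι k < m) {g : Finset β → R}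
    (hg : g ∈ chains R F q) :
    Function.extend (mapUnion ι M) g 0 ∈ chains R (mapUnion ι M '' F) (q + #M) := by
  intro S hS
  by_cases h : ∃ T, mapUnion ι M T = S
  · obtain ⟨T, rfl⟩ := h
    rw [(mapUnion_injective hM).extend_apply] at hS
    rw [card_mapUnion hM, Nat.cast_add, (hg T hS).2]
    exact ⟨Set.mem_image_of_mem _ (hg T hS).1, rfl⟩
  · exact absurd (Function.extend_apply' _ _ _ h) hS

variable [Fintype α] [Fintype β]

lemma boundary_apply_mapUnion (hM : ∀ k, ∀ m ∈ M, ι k < m)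
    (hf : ∀ S, f S ≠ 0 → S ∈ Set.range (mapUnion ι M)) (T : Finset β) :
    boundary R f (mapUnion ι M T) = boundary R (f ∘ mapUnion ι M) T := by
  have hsub : Tᶜ.map ι.toEmbedding ⊆ (mapUnion ι M T)ᶜ := by
    intro a ha
    obtain ⟨k, hk, rfl⟩ := Finset.mem_map.1 ha
    exact Finset.mem_compl.2 fun h => Finset.mem_compl.1 hk ((apply_mem_mapUnion hM).1 h)
  rw [boundary_apply, ← Finset.sum_subset hsub, Finset.sum_map]
  · refine Finset.sum_congr rfl fun k _ => ?_
    rw [RelEmbedding.coe_toEmbedding, incidenceSign_mapUnion hM, ← mapUnion_insert,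
      Function.comp_apply]
  · intro a ha hak
    by_contra h
    obtain ⟨S, hS⟩ := hf _ (right_ne_zero_of_mul h)
    have haS : a ∈ mapUnion ι M S := hS ▸ Finset.mem_insert_self a _
    rcases Finset.mem_union.1 haS with haS | haM
    · obtain ⟨k, -, rfl⟩ := Finset.mem_map.1 haS
      refine hak (Finset.mem_map_of_mem _ (Finset.mem_compl.2 fun hk => ?_))
      exact Finset.mem_compl.1 ha ((apply_mem_mapUnion hM).2 hk)
    · exact Finset.mem_compl.1 ha (Finset.mem_union_right _ haM)

lemma acyclic_image_mapUnion_iff (hM : ∀ k, ∀ m ∈ M, ι k < m) :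
    Acyclic R (mapUnion ι M '' F) (q + #M) ↔ Acyclic R F q := by
  have hrange {f : Finset α → R} {r : ℤ} (hf : f ∈ chains R (mapUnion ι M '' F) r) (S)
      (hS : f S ≠ 0) : S ∈ Set.range (mapUnion ι M) := Set.image_subset_range _ _ (hf S hS).1
  have hcomp (g : Finset β → R) : Function.extend (mapUnion ι M) g 0 ∘ mapUnion ι M = g :=
    Function.extend_comp (mapUnion_injective hM) g 0
  constructor
  · intro h g hg hcycle
    have hg' := extend_mapUnion_mem_chains hM hg
    obtain ⟨e, he, heg⟩ := h _ hg' <| by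
      rintro _ ⟨T, hT, rfl⟩
      rw [boundary_apply_mapUnion hM (hrange hg'), hcomp, hcycle T hT]
    rw [add_right_comm] at he
    refine ⟨e ∘ mapUnion ι M, comp_mapUnion_mem_chains hM he, fun T hT => ?_⟩
    rw [← boundary_apply_mapUnion hM (hrange he), heg _ (Set.mem_image_of_mem _ hT),
      (mapUnion_injective hM).extend_apply]
  · intro h f hf hcycle
    obtain ⟨e, he, hef⟩ := h _ (comp_mapUnion_mem_chains hM hf) fun T hT => by
      rw [← boundary_apply_mapUnion hM (hrange hf), hcycle _ (Set.mem_image_of_mem _ hT)]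
    have he' := extend_mapUnion_mem_chains hM he
    refine ⟨_, add_right_comm q 1 (#M : ℤ) ▸ he', ?_⟩
    rintro _ ⟨T, hT, rfl⟩
    rw [boundary_apply_mapUnion hM (hrange he'), hcomp, hef T hT, Function.comp_apply]

end Transport

/-! ### Domination and Hochster duality -/

section Domination

variable {α : Type*} (B : SimpleGraph α)

/-- The independent sets of `B` containing `C`. -/
def indepContaining (C : Finset α) : Set (Finset α) := {S | C ⊆ S ∧ B.IsIndepSet S}

/-- The vertex sets adjacent in `B` to every element of `A`. -/
def dominating (A : Finset α) : Set (Finset α) := {S | ∀ a ∈ A, ∃ b ∈ S, B.Adj a b}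

variable {B}

lemma isUpperSet_dominating (A : Finset α) : IsUpperSet (dominating B A) :=
  fun _ _ hST hS a ha => (hS a ha).imp fun _ hb => ⟨hST hb.1, hb.2⟩

lemma ordConnected_indepContaining (C : Finset α) : (indepContaining B C).OrdConnected :=
  ⟨fun _ hS _ hT _ h => ⟨hS.1.trans h.1, hT.2.mono (Finset.coe_subset.2 h.2)⟩⟩

variable [LinearOrder α] [Fintype α] {R : Type*} [CommRing R] {A C : Finset α}

/- The independent sets dominating `A` but not `insert a A` form a cone with apex `a`. -/
lemma acyclic_indepContaining_diff_dominating (hA : B.IsIndepSet A) (hAC : Disjoint A C) (q : ℤ) :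
    Acyclic R (indepContaining B C \ dominating B A) q := by
  induction A using Finset.induction_on generalizing q with
  | empty => exact acyclic_of_forall_card_ne fun S hS => absurd (by simp [dominating]) hS.2
  | insert a A _ ih =>
    have hA' : B.IsIndepSet A := hA.mono (Finset.coe_subset.2 (Finset.subset_insert a A))
    obtain ⟨haC, hAC'⟩ := Finset.disjoint_insert_left.1 hAC
    have haA' : ∀ b ∈ A, ¬ B.Adj b a := fun b hb h =>
      hA (Finset.mem_insert_of_mem hb) (Finset.mem_insert_self a A) h.ne h
    have hdom : ∀ S, S ∈ dominating B (insert a A) ↔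
        (∃ b ∈ S, B.Adj a b) ∧ S ∈ dominating B A := fun S => Finset.forall_mem_insert ..
    have hconv : (indepContaining B C \ dominating B (insert a A)).OrdConnected :=
      (ordConnected_indepContaining C).inter (isUpperSet_dominating _).compl.ordConnected
    refine .of_diff_of_inter hconv (isUpperSet_dominating (B := B) A) ?_ (acyclic_of_cone a ?_ ?_ q)
    · rw [Set.sdiff_sdiff, Set.union_eq_right.2 fun S hS => ((hdom S).1 hS).2]
      exact ih hA' hAC' q
    · rintro S ⟨⟨⟨hC, hS⟩, hnd⟩, hd⟩
      have haS : ∀ b ∈ S, ¬ B.Adj a b := fun b hb hab => hnd ((hdom S).2 ⟨⟨b, hb, hab⟩, hd⟩)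
      refine ⟨⟨⟨hC.trans (Finset.subset_insert a S), ?_⟩, fun h => ?_⟩,
        isUpperSet_dominating A (Finset.subset_insert a S) hd⟩
      · rw [Finset.coe_insert]
        exact hS.insert fun b hb _ => ⟨haS b hb, fun h => haS b hb h.symm⟩
      · obtain ⟨b, hb, hab⟩ := ((hdom _).1 h).1
        exact haS b (Finset.mem_of_mem_insert_of_ne hb hab.ne') hab
    · rintro S ⟨⟨⟨hC, hS⟩, hnd⟩, hd⟩
      have hle := Finset.erase_subset a S
      refine ⟨⟨⟨Finset.subset_erase.2 ⟨hC, haC⟩, hS.mono (Finset.coe_subset.2 hle)⟩,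
        fun h => hnd (isUpperSet_dominating _ hle h)⟩, fun b hb => ?_⟩
      obtain ⟨c, hc, hbc⟩ := hd b hb
      exact ⟨c, Finset.mem_erase.2 ⟨fun h => haA' b hb (h ▸ hbc), hc⟩, hbc⟩

lemma acyclic_indepContaining_iff (hA : B.IsIndepSet A) (hAC : Disjoint A C) (q : ℤ) :
    Acyclic R (indepContaining B C) q ↔ Acyclic R (indepContaining B C ∩ dominating B A) q :=
  ⟨fun h => h.inter (ordConnected_indepContaining C) (isUpperSet_dominating A)
      (acyclic_indepContaining_diff_dominating hA hAC _),
    .of_diff_of_inter (ordConnected_indepContaining C) (isUpperSet_dominating A)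
      (acyclic_indepContaining_diff_dominating hA hAC q)⟩

end Domination

section Duality

/-- The subfamilies of the hypergraph `E` whose union is exactly `W`. -/
def exactCovers {κ V : Type*} [DecidableEq V] (E : κ → Finset V) (W : Finset V) :
    Set (Finset κ) :=
  {T | T.biUnion E = W}

/-- The sets of vertices containing the complement of `W` and meeting every edge of `E`. -/
def transversals {κ V : Type*} [Fintype V] [DecidableEq V] (E : κ → Finset V) (W : Finset V) :
    Set (Finset V) :=
  {s | Wᶜ ⊆ s ∧ ∀ k, ∃ x ∈ E k, x ∈ s}

variable {α κ V : Type*}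

/-- The incidence graph of the hypergraph `E`, with edges and vertices embedded in a common type
`α` by `ι` and `τ`. -/
def incidenceGraph (ι : κ → α) (τ : V → α) (E : κ → Finset V) : SimpleGraph α :=
  .fromRel fun a b => ∃ k, ∃ x ∈ E k, ι k = a ∧ τ x = b

variable [LinearOrder α] [LinearOrder κ] [LinearOrder V] {ι : κ ↪o α} {τ : V ↪o α}
  {E : κ → Finset V}

lemma incidenceGraph_adj_inl (hlt : ∀ k x, ι k < τ x) {k : κ} {a : α} :
    (incidenceGraph ι τ E).Adj (ι k) a ↔ ∃ x ∈ E k, τ x = a := by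
  refine ⟨?_, ?_⟩
  · rintro ⟨-, ⟨k', x, hx, hk, rfl⟩ | ⟨k', x, -, -, hk⟩⟩
    · exact ⟨x, ι.injective hk ▸ hx, rfl⟩
    · exact absurd hk (hlt k x).ne'
  · rintro ⟨x, hx, rfl⟩
    exact ⟨(hlt k x).ne, .inl ⟨k, x, hx, rfl, rfl⟩⟩

lemma incidenceGraph_adj_inr (hlt : ∀ k x, ι k < τ x) {x : V} {a : α} :
    (incidenceGraph ι τ E).Adj (τ x) a ↔ ∃ k, x ∈ E k ∧ ι k = a := by
  refine ⟨?_, ?_⟩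
  · rintro ⟨-, ⟨k, y, -, hk, -⟩ | ⟨k, y, hy, hk, hyx⟩⟩
    · exact absurd hk (hlt k x).ne
    · exact ⟨k, τ.injective hyx ▸ hy, hk⟩
  · rintro ⟨k, hk, rfl⟩
    exact ⟨(hlt k x).ne', .inr ⟨k, x, hk, rfl, rfl⟩⟩

lemma isIndepSet_map_inl (hlt : ∀ k x, ι k < τ x) (T : Finset κ) :
    (incidenceGraph ι τ E).IsIndepSet (T.map ι.toEmbedding : Finset α) := by
  rw [Finset.coe_map]
  rintro _ ⟨k, -, rfl⟩ _ ⟨l, -, rfl⟩ - h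
  obtain ⟨x, -, hx⟩ := (incidenceGraph_adj_inl hlt).1 h
  exact (hlt l x).ne' hx

lemma isIndepSet_map_inr (hlt : ∀ k x, ι k < τ x) (s : Finset V) :
    (incidenceGraph ι τ E).IsIndepSet (s.map τ.toEmbedding : Finset α) := by
  rw [Finset.coe_map]
  rintro _ ⟨x, -, rfl⟩ _ ⟨y, -, rfl⟩ - h
  obtain ⟨k, -, hk⟩ := (incidenceGraph_adj_inr hlt).1 h
  exact (hlt k y).ne hk

lemma mem_dominating_map_inl [Fintype κ] (hlt : ∀ k x, ι k < τ x) {S : Finset α} :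
    S ∈ dominating (incidenceGraph ι τ E) (Finset.univ.map ι.toEmbedding) ↔
      ∀ k, ∃ x ∈ E k, τ x ∈ S := by
  simp only [dominating, Set.mem_ofPred_eq, Finset.forall_mem_map, Finset.mem_univ, true_imp_iff]
  refine forall_congr' fun k => ⟨?_, fun ⟨x, hx, hS⟩ =>
    ⟨τ x, hS, (incidenceGraph_adj_inl hlt).2 ⟨x, hx, rfl⟩⟩⟩
  rintro ⟨_, hS, h⟩
  obtain ⟨x, hx, rfl⟩ := (incidenceGraph_adj_inl hlt).1 h
  exact ⟨x, hx, hS⟩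

lemma mem_dominating_map_inr (hlt : ∀ k x, ι k < τ x) {W : Finset V} {S : Finset α} :
    S ∈ dominating (incidenceGraph ι τ E) (W.map τ.toEmbedding) ↔
      ∀ x ∈ W, ∃ k, x ∈ E k ∧ ι k ∈ S := by
  simp only [dominating, Set.mem_ofPred_eq, Finset.forall_mem_map]
  refine forall₂_congr fun x _ => ⟨?_, fun ⟨k, hk, hS⟩ =>
    ⟨ι k, hS, (incidenceGraph_adj_inr hlt).2 ⟨k, hk, rfl⟩⟩⟩
  rintro ⟨_, hS, h⟩
  obtain ⟨k, hk, rfl⟩ := (incidenceGraph_adj_inr hlt).1 h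
  exact ⟨k, hk, hS⟩

variable [Fintype V]

lemma mem_indepContaining_incidenceGraph (hlt : ∀ k x, ι k < τ x)
    (hcover : ∀ a, a ∈ Set.range ι ∨ a ∈ Set.range τ) {W : Finset V} {S : Finset α} :
    S ∈ indepContaining (incidenceGraph ι τ E) (Wᶜ.map τ.toEmbedding) ↔
      (∀ x ∉ W, τ x ∈ S) ∧ ∀ k, ι k ∈ S → ∀ x ∈ E k, τ x ∉ S := by
  refine and_congr ?_ ⟨fun hS k hk x hx hxS => ?_, fun h a ha b hb _ hab => ?_⟩
  · simp only [Finset.subset_iff, Finset.forall_mem_map, Finset.mem_compl,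
      RelEmbedding.coe_toEmbedding]
  · exact hS hk hxS (hlt k x).ne ((incidenceGraph_adj_inl hlt).2 ⟨x, hx, rfl⟩)
  · rcases hcover a with ⟨k, rfl⟩ | ⟨x, rfl⟩
    · obtain ⟨x, hx, rfl⟩ := (incidenceGraph_adj_inl hlt).1 hab
      exact h k ha x hx hb
    · obtain ⟨k, hk, rfl⟩ := (incidenceGraph_adj_inr hlt).1 hab
      exact h k hb x hk ha

lemma image_mapUnion_exactCovers [Finite κ] (hlt : ∀ k x, ι k < τ x)
    (hcover : ∀ a, a ∈ Set.range ι ∨ a ∈ Set.range τ) (W : Finset V) :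
    mapUnion ι (Wᶜ.map τ.toEmbedding) '' exactCovers E W =
      indepContaining (incidenceGraph ι τ E) (Wᶜ.map τ.toEmbedding) ∩
        dominating (incidenceGraph ι τ E) (W.map τ.toEmbedding) := by
  cases nonempty_fintype κ
  have hne : ∀ k x, ι k ≠ τ x := fun k x => (hlt k x).ne
  ext S
  rw [Set.mem_inter_iff, mem_indepContaining_incidenceGraph hlt hcover, mem_dominating_map_inr hlt]
  constructor
  · rintro ⟨T, rfl, rfl⟩
    simp only [mapUnion, Finset.mem_union, Finset.mem_map, RelEmbedding.coe_toEmbedding, hne,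
      (hne _ _).symm, ι.injective.eq_iff, τ.injective.eq_iff, Finset.mem_compl, Finset.mem_biUnion]
    grind
  · rintro ⟨⟨hC, hS⟩, hdom⟩
    refine ⟨Finset.univ.filter fun k => ι k ∈ S, Finset.ext fun x => ?_, Finset.ext fun a => ?_⟩
    · simp only [Finset.mem_biUnion, Finset.mem_filter, Finset.mem_univ, true_and]
      exact ⟨fun ⟨k, hk, hx⟩ => by_contra fun hxW => hS k hk x hx (hC x hxW),
        fun hx => (hdom x hx).imp fun _ h => h.symm⟩
    · rcases hcover a with ⟨k, rfl⟩ | ⟨x, rfl⟩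
      · simp [mapUnion, (hne _ _).symm]
      · have hx : τ x ∈ S ↔ x ∉ W := ⟨fun h hx => (hdom x hx).elim fun k hk => hS k hk.2 x hk.1 h,
          hC x⟩
        simp [mapUnion, hne, hx]

variable [Fintype κ]

lemma image_mapUnion_transversals (hlt : ∀ k x, ι k < τ x)
    (hcover : ∀ a, a ∈ Set.range ι ∨ a ∈ Set.range τ) (W : Finset V) :
    mapUnion τ ∅ '' transversals E W =
      indepContaining (incidenceGraph ι τ E) (Wᶜ.map τ.toEmbedding) ∩
        dominating (incidenceGraph ι τ E) (Finset.univ.map ι.toEmbedding) := by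
  have hne : ∀ k x, ι k ≠ τ x := fun k x => (hlt k x).ne
  ext S
  rw [Set.mem_inter_iff, mem_indepContaining_incidenceGraph hlt hcover, mem_dominating_map_inl hlt]
  constructor
  · rintro ⟨s, ⟨hW, hs⟩, rfl⟩
    have hW' : ∀ x ∉ W, x ∈ s := fun x hx => hW (Finset.mem_compl.2 hx)
    simpa [mapUnion, (hne _ _).symm] using ⟨hW', hs⟩
  · rintro ⟨⟨hC, hS⟩, hdom⟩
    have hι : ∀ k, ι k ∉ S := fun k hk => (hdom k).elim fun x hx => hS k hk x hx.1 hx.2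
    refine ⟨Finset.univ.filter fun x => τ x ∈ S, ⟨fun x hx => ?_, by simpa using hdom⟩,
      Finset.ext fun a => ?_⟩
    · simpa using hC x (Finset.mem_compl.1 hx)
    · rcases hcover a with ⟨k, rfl⟩ | ⟨x, rfl⟩ <;> simp [mapUnion, hι, (hne _ _).symm]

/- Both families are what remains of the independent sets of the incidence graph that contain
`Wᶜ`, after discarding those not dominating `W`, respectively those not dominating the edges. -/
theorem acyclic_exactCovers_iff (R : Type*) [CommRing R] (E : κ → Finset V) (W : Finset V)
    (q : ℤ) :
    Acyclic R (exactCovers E W) q ↔ Acyclic R (transversals E W) (q + #Wᶜ) := by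
  let ι : κ ↪o κ ⊕ₗ V := .ofStrictMono _ Sum.Lex.inl_strictMono
  let τ : V ↪o κ ⊕ₗ V := .ofStrictMono _ Sum.Lex.inr_strictMono
  have hlt : ∀ k x, ι k < τ x := Sum.Lex.inl_lt_inr
  have hcover : ∀ a, a ∈ Set.range ι ∨ a ∈ Set.range τ
    | Sum.inlₗ k => .inl ⟨k, rfl⟩
    | Sum.inrₗ x => .inr ⟨x, rfl⟩
  have hM : ∀ k, ∀ m ∈ Wᶜ.map τ.toEmbedding, ι k < m := fun k m hm => by
    obtain ⟨x, -, rfl⟩ := Finset.mem_map.1 hm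
    exact hlt k x
  have hedges : Disjoint (Finset.univ.map ι.toEmbedding) (Wᶜ.map τ.toEmbedding) :=
    Finset.disjoint_left.2 fun a ha h => by
      obtain ⟨k, -, rfl⟩ := Finset.mem_map.1 ha
      exact (hM k _ h).false
  rw [← acyclic_image_mapUnion_iff hM, image_mapUnion_exactCovers hlt hcover,
    ← acyclic_indepContaining_iff (isIndepSet_map_inr hlt W)
      ((Finset.disjoint_map _).2 disjoint_compl_right),
    acyclic_indepContaining_iff (isIndepSet_map_inl hlt Finset.univ) hedges,
    ← image_mapUnion_transversals hlt hcover, Finset.card_map,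
    ← acyclic_image_mapUnion_iff (ι := τ) (M := ∅) (by simp), Finset.card_empty, Nat.cast_zero,
    add_zero]

end Duality

/-! ### Cohomology of clique complexes -/

section Cliques

variable {V : Type*} [Fintype V] [DecidableEq V] (H : SimpleGraph V)

/-- The complements of the cliques of `H` contained in `W`. Passing to complements turns cochains
of the clique complex of `H[W]` into chains. -/
def cliqueComplements (W : Finset V) : Set (Finset V) :=
  {s | sᶜ ⊆ W ∧ H.IsClique (sᶜ : Finset V)}

open Classical in
/-- The neighbours of `v` in `W`. -/
noncomputable def neighborsIn (v : V) (W : Finset V) : Finset V := {w ∈ W | H.Adj v w}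

variable {H} {v w : V} {W : Finset V}

omit [Fintype V] [DecidableEq V] in
lemma mem_neighborsIn : w ∈ neighborsIn H v W ↔ w ∈ W ∧ H.Adj v w := by
  classical exact Finset.mem_filter

omit [Fintype V] [DecidableEq V] in
lemma neighborsIn_subset : neighborsIn H v W ⊆ W :=
  fun _ hw => (mem_neighborsIn.1 hw).1

lemma isUpperSet_cliqueComplements (W : Finset V) : IsUpperSet (cliqueComplements H W) :=
  fun _ _ hst hs => ⟨(Finset.compl_subset_compl.2 hst).trans hs.1,
    SimpleGraph.IsClique.subset (Finset.coe_subset.2 (Finset.compl_subset_compl.2 hst)) hs.2⟩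

lemma isUpperSet_compl_subset (W : Finset V) : IsUpperSet {s : Finset V | sᶜ ⊆ W} :=
  fun _ _ hst hs => (Finset.compl_subset_compl.2 hst).trans hs

lemma cliqueComplements_inter_compl_subset (W X : Finset V) :
    cliqueComplements H W ∩ {s | sᶜ ⊆ X} = cliqueComplements H (W ∩ X) := by
  ext s
  simp only [cliqueComplements, Set.mem_inter_iff, Set.mem_ofPred_eq, Finset.subset_inter_iff]
  tauto

lemma cliqueComplements_insert_inter (v : V) (W : Finset V) :
    cliqueComplements H (insert v W) ∩ {s | sᶜ ⊆ W} = cliqueComplements H W := by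
  rw [cliqueComplements_inter_compl_subset,
    Finset.inter_eq_right.2 (Finset.subset_insert v W)]

lemma notMem_of_mem_cliqueComplements_diff {s : Finset V}
    (hs : s ∈ cliqueComplements H (insert v W) \ {s | sᶜ ⊆ W}) : v ∉ s := fun hv =>
  hs.2 ((Finset.subset_insert_iff_of_notMem (by simpa using hv)).1 hs.1.1)

lemma adjoin_cliqueComplements_diff (hv : v ∉ W) :
    {s | v ∈ s ∧ s.erase v ∈ cliqueComplements H (insert v W) \ {s | sᶜ ⊆ W}} =
      cliqueComplements H (neighborsIn H v W) := by
  ext s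
  simp only [cliqueComplements, Set.mem_sdiff, Set.mem_ofPred_eq, Finset.compl_erase,
    Finset.insert_subset_iff, Finset.mem_insert_self, hv, false_and, not_false_eq_true, and_true,
    true_and, Finset.coe_insert]
  constructor
  · rintro ⟨hvs, hsW, hs⟩
    rw [SimpleGraph.isClique_insert_of_notMem (by simpa using hvs)] at hs
    rw [Finset.subset_insert_iff_of_notMem (by simpa using hvs)] at hsW
    exact ⟨fun w hw => mem_neighborsIn.2 ⟨hsW hw, hs.2 w hw⟩, hs.1⟩
  · rintro ⟨hsN, hs⟩
    have hvs : v ∉ sᶜ := fun h => hv (neighborsIn_subset (hsN h))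
    refine ⟨by simpa using hvs, (hsN.trans neighborsIn_subset).trans (Finset.subset_insert v W), ?_⟩
    exact hs.insert fun w hw _ => (mem_neighborsIn.1 (hsN hw)).2

end Cliques

section CliqueCohomology

variable {V : Type*} [Fintype V] [LinearOrder V] (R : Type*) [CommRing R] (H : SimpleGraph V)

/-- Nonvanishing, in degree `c - 1`, of the reduced cohomology with coefficients in `R` of the
clique complex of the subgraph of `H` induced on `W`; thus `c` counts the vertices of a face. -/
def HasCliqueCohomology (c : ℕ) (W : Finset V) : Prop :=
  ¬ Acyclic R (cliqueComplements H W) (Fintype.card V - c)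

variable {R H} {v : V} {A B W : Finset V} {c : ℕ}

lemma acyclic_cliqueComplements_diff_iff (hv : v ∉ W) (q : ℤ) :
    Acyclic R (cliqueComplements H (insert v W) \ {s | sᶜ ⊆ W}) q ↔
      Acyclic R (cliqueComplements H (neighborsIn H v W)) (q + 1) := by
  have hconv : (cliqueComplements H (insert v W) \ {s | sᶜ ⊆ W}).OrdConnected :=
    (isUpperSet_cliqueComplements _).ordConnected.inter
      (isUpperSet_compl_subset W).compl.ordConnected
  rw [← adjoin_cliqueComplements_diff hv,
    acyclic_adjoin_iff hconv fun s => notMem_of_mem_cliqueComplements_diff]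

lemma HasCliqueCohomology.of_insert (hv : v ∉ W)
    (h : HasCliqueCohomology R H (c + 1) (insert v W)) :
    HasCliqueCohomology R H (c + 1) W ∨ HasCliqueCohomology R H c (neighborsIn H v W) := by
  unfold HasCliqueCohomology at *
  contrapose! h
  refine .of_diff_of_inter (isUpperSet_cliqueComplements _).ordConnected
    (isUpperSet_compl_subset W) ?_ (by rw [cliqueComplements_insert_inter]; exact h.1)
  rw [acyclic_cliqueComplements_diff_iff hv]
  convert h.2 using 1
  push_cast; ring

lemma HasCliqueCohomology.insert_or_neighborsIn (hv : v ∉ W) (h : HasCliqueCohomology R H c W) :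
    HasCliqueCohomology R H c (insert v W) ∨
      HasCliqueCohomology R H c (neighborsIn H v W) := by
  unfold HasCliqueCohomology at *
  contrapose! h
  rw [← cliqueComplements_insert_inter v W]
  refine h.1.inter (isUpperSet_cliqueComplements _).ordConnected (isUpperSet_compl_subset W) ?_
  rw [acyclic_cliqueComplements_diff_iff hv, sub_add_cancel]
  exact h.2

lemma HasCliqueCohomology.of_neighborsIn (hv : v ∉ W)
    (h : HasCliqueCohomology R H c (neighborsIn H v W)) :
    HasCliqueCohomology R H (c + 1) (insert v W) ∨ HasCliqueCohomology R H c W := by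
  unfold HasCliqueCohomology at *
  contrapose! h
  have hq : (Fintype.card V - (c + 1 : ℕ) : ℤ) + 1 = Fintype.card V - c := by push_cast; ring
  rw [← hq, ← acyclic_cliqueComplements_diff_iff hv]
  refine h.1.diff (isUpperSet_cliqueComplements _).ordConnected (isUpperSet_compl_subset W) ?_
  rw [cliqueComplements_insert_inter, hq]
  exact h.2

lemma not_hasCliqueCohomology_of_forall_adj (hv : v ∈ W) (hadj : ∀ w ∈ W, w ≠ v → H.Adj v w)
    (c : ℕ) : ¬ HasCliqueCohomology R H c W := by
  refine not_not.2 (acyclic_of_cone v (fun s hs => isUpperSet_cliqueComplements W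
    (Finset.subset_insert v s) hs) (fun s hs => ?_) _)
  rw [cliqueComplements, Set.mem_ofPred_eq, Finset.compl_erase]
  refine ⟨Finset.insert_subset hv hs.1, ?_⟩
  rw [Finset.coe_insert]
  exact hs.2.insert fun w hw hvw => hadj w (hs.1 hw) hvw.symm

lemma exists_clique_of_hasCliqueCohomology (h : HasCliqueCohomology R H c W) :
    ∃ t ⊆ W, H.IsClique t ∧ #t = c := by
  by_contra! ht
  refine h (acyclic_of_forall_card_ne fun s hs hcard => ht sᶜ hs.1 hs.2 ?_)
  have := Finset.card_add_card_compl s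
  omega

lemma HasCliqueCohomology.lt_card (h : HasCliqueCohomology R H c W) (hW : W.Nonempty) :
    c < #W := by
  obtain ⟨t, htW, ht, rfl⟩ := exists_clique_of_hasCliqueCohomology h
  refine Finset.card_lt_card (htW.ssubset_of_ne ?_)
  rintro rfl
  obtain ⟨v, hv⟩ := hW
  exact not_hasCliqueCohomology_of_forall_adj hv (fun w hw hwv => ht hv hw hwv.symm) _ h

lemma hasCliqueCohomology_empty_iff [Nontrivial R] : HasCliqueCohomology R H c ∅ ↔ c = 0 := by
  constructor
  · intro h
    obtain ⟨t, ht, -, rfl⟩ := exists_clique_of_hasCliqueCohomology h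
    rw [Finset.subset_empty.1 ht, Finset.card_empty]
  · rintro rfl h
    have huniv : ∀ s ∈ cliqueComplements H ∅, s = Finset.univ := fun s hs =>
      (Finset.compl_eq_empty_iff s).1 (Finset.subset_empty.1 hs.1)
    have hmem : Finset.univ ∈ cliqueComplements H ∅ := by simp [cliqueComplements]
    have hzero (f : Finset V → R) : boundary R f Finset.univ = 0 := by simp [boundary_apply]
    obtain ⟨e, -, he⟩ := h (Pi.single Finset.univ 1) (fun s hs => by
      obtain rfl : s = Finset.univ := by_contra fun h => hs (Pi.single_eq_of_ne h 1)
      exact ⟨hmem, by simp⟩) fun s hs => by rw [huniv s hs, hzero]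
    have huniv_eq := he _ hmem
    rw [hzero, Pi.single_eq_same] at huniv_eq
    exact zero_ne_one huniv_eq

lemma hasCliqueCohomology_zero_iff [Nontrivial R] : HasCliqueCohomology R H 0 W ↔ W = ∅ := by
  refine ⟨fun h => Finset.not_nonempty_iff_eq_empty.1 fun ⟨v, hv⟩ => h fun f hf hcycle => ?_,
    fun h => h ▸ hasCliqueCohomology_empty_iff.2 rfl⟩
  have hf_univ : f Finset.univ = 0 := by
    have hbd := hcycle {v}ᶜ (by simp [cliqueComplements, hv])
    rw [boundary_apply, compl_compl, Finset.sum_singleton, Finset.insert_compl_self] at hbd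
    rw [← one_mul (f _), ← incidenceSign_mul_self R v {v}ᶜ, mul_assoc, hbd, mul_zero]
  have hf_zero : f = 0 := funext fun s => by_contra fun hs => by
    have hcard := (hf s hs).2
    rw [Nat.cast_zero, sub_zero, Nat.cast_inj, Finset.card_eq_iff_eq_univ] at hcard
    exact hs (hcard ▸ hf_univ)
  exact ⟨0, zero_mem _, fun T _ => by rw [hf_zero, map_zero]⟩

lemma HasCliqueCohomology.of_union (hAB : ∀ a ∈ A \ B, ∀ b ∈ B \ A, ¬ H.Adj a b)
    (h : HasCliqueCohomology R H (c + 1) (A ∪ B)) :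
    HasCliqueCohomology R H (c + 1) A ∨ HasCliqueCohomology R H (c + 1) B ∨
      HasCliqueCohomology R H c (B ∩ A) := by
  unfold HasCliqueCohomology at *
  contrapose! h
  obtain ⟨hA, hB, hBA⟩ := h
  have hdiff : cliqueComplements H (A ∪ B) \ {s | sᶜ ⊆ A} =
      cliqueComplements H B \ {s | sᶜ ⊆ A} := by
    ext s
    simp only [cliqueComplements, Set.mem_sdiff, Set.mem_ofPred_eq]
    refine ⟨fun ⟨⟨hs, hcl⟩, hsA⟩ => ⟨⟨fun y hy => ?_, hcl⟩, hsA⟩,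
      fun ⟨⟨hs, hcl⟩, hsA⟩ => ⟨⟨hs.trans Finset.subset_union_right, hcl⟩, hsA⟩⟩
    by_contra hyB
    have hyA := (Finset.mem_union.1 (hs hy)).resolve_right hyB
    obtain ⟨x, hx, hxA⟩ := Finset.not_subset.1 hsA
    have hxB := (Finset.mem_union.1 (hs hx)).resolve_left hxA
    exact hAB y (Finset.mem_sdiff.2 ⟨hyA, hyB⟩) x (Finset.mem_sdiff.2 ⟨hxB, hxA⟩)
      (hcl hy hx fun h => hxA (h ▸ hyA))
  refine .of_diff_of_inter (isUpperSet_cliqueComplements _).ordConnected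
    (isUpperSet_compl_subset A) ?_ ?_
  · rw [hdiff]
    refine hB.diff (isUpperSet_cliqueComplements _).ordConnected (isUpperSet_compl_subset A) ?_
    rw [cliqueComplements_inter_compl_subset]
    convert hBA using 1
    push_cast; ring
  · rwa [cliqueComplements_inter_compl_subset, Finset.inter_eq_right.2 Finset.subset_union_left]

end CliqueCohomology

section NeighborsIn

variable {V : Type*} {H : SimpleGraph V} {v w : V} {W : Finset V}

lemma neighborsIn_eq_self (hadj : ∀ w ∈ W, H.Adj v w) : neighborsIn H v W = W :=
  neighborsIn_subset.antisymm fun w hw => mem_neighborsIn.2 ⟨hw, hadj w hw⟩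

variable [DecidableEq V]

lemma neighborsIn_insert_of_adj (hvw : H.Adj v w) (W : Finset V) :
    neighborsIn H v (insert w W) = insert w (neighborsIn H v W) := by
  ext x
  simp only [mem_neighborsIn, Finset.mem_insert]
  grind

lemma neighborsIn_insert_of_not_adj (hvw : ¬ H.Adj v w) (W : Finset V) :
    neighborsIn H v (insert w W) = neighborsIn H v W := by
  ext x
  simp only [mem_neighborsIn, Finset.mem_insert]
  grind

lemma neighborsIn_erase_self (v : V) (W : Finset V) :
    neighborsIn H v (W.erase v) = neighborsIn H v W := by
  ext x
  simp only [mem_neighborsIn, Finset.mem_erase]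
  exact ⟨fun h => ⟨h.1.2, h.2⟩, fun h => ⟨⟨h.2.ne', h.1⟩, h.2⟩⟩

end NeighborsIn

section Disconnection

variable {V : Type*} [Fintype V] [LinearOrder V] {R : Type*} [CommRing R] {H : SimpleGraph V}
  {v : V} {W X : Finset V} {a b : V} {c : ℕ}

lemma HasCliqueCohomology.erase_or_neighborsIn (hv : v ∈ W)
    (h : HasCliqueCohomology R H (c + 1) W) :
    HasCliqueCohomology R H (c + 1) (W.erase v) ∨
      HasCliqueCohomology R H c (neighborsIn H v W) := by
  rw [← neighborsIn_erase_self]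
  rw [← Finset.insert_erase hv] at h
  exact h.of_insert (Finset.notMem_erase v W)

lemma not_hasCliqueCohomology_insert (hadj : ∀ w ∈ W, H.Adj v w) (c : ℕ) :
    ¬ HasCliqueCohomology R H c (insert v W) :=
  not_hasCliqueCohomology_of_forall_adj (Finset.mem_insert_self v W)
    (fun w hw hwv => hadj w ((Finset.mem_insert.1 hw).resolve_left hwv)) c

lemma hasCliqueCohomology_suspension_iff (ha : a ∉ X) (hab : a ≠ b) (hadj : ¬ H.Adj a b)
    (haX : ∀ x ∈ X, H.Adj a x) (hbX : ∀ x ∈ X, H.Adj b x) :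
    HasCliqueCohomology R H (c + 1) (insert a (insert b X)) ↔ HasCliqueCohomology R H c X := by
  have ha' : a ∉ insert b X := Finset.mem_insert.not.2 (not_or.2 ⟨hab, ha⟩)
  have hN : neighborsIn H a (insert b X) = X := by
    rw [neighborsIn_insert_of_not_adj hadj, neighborsIn_eq_self haX]
  constructor
  · intro h
    exact hN ▸ (h.of_insert ha').resolve_left (not_hasCliqueCohomology_insert hbX _)
  · intro h
    exact (HasCliqueCohomology.of_neighborsIn ha' (hN.symm ▸ h)).resolve_right
      (not_hasCliqueCohomology_insert hbX _)

variable [Nontrivial R]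

lemma hasCliqueCohomology_one_pair (hab : a ≠ b) (hadj : ¬ H.Adj a b) :
    HasCliqueCohomology R H 1 {a, b} := by
  rw [← insert_empty_eq b]
  exact (hasCliqueCohomology_suspension_iff (Finset.notMem_empty a) hab hadj (by simp)
    (by simp)).2 (hasCliqueCohomology_zero_iff.2 rfl)

lemma HasCliqueCohomology.exists_disconnection (h : HasCliqueCohomology R H 1 W) :
    ∃ U ⊂ W, U.Nonempty ∧ ∀ u ∈ U, ∀ v ∈ W \ U, ¬ H.Adj u v := by
  classical
  obtain ⟨x, hx⟩ : W.Nonempty := by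
    rw [Finset.nonempty_iff_ne_empty]
    rintro rfl
    exact one_ne_zero (hasCliqueCohomology_empty_iff.1 h)
  obtain ⟨U, -, hU⟩ := Finset.exists_le_maximal
    {U ∈ W.powerset | U.Nonempty ∧ ¬ HasCliqueCohomology R H 1 U} (a := {x}) <| by
      simpa [hx] using not_hasCliqueCohomology_insert (W := ∅) (v := x) (by simp) 1
  simp only [Finset.mem_filter, Finset.mem_powerset] at hU
  obtain ⟨hUW, hUne, hU1⟩ := hU.prop
  refine ⟨U, hUW.ssubset_of_ne fun hUW => hU1 (hUW ▸ h), hUne, fun u hu v hv huv => ?_⟩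
  obtain ⟨hvW, hvU⟩ := Finset.mem_sdiff.1 hv
  have hins : HasCliqueCohomology R H 1 (insert v U) := by
    by_contra hins
    exact hvU (hU.le_of_ge ⟨Finset.insert_subset hvW hUW, by simp, hins⟩
      (Finset.subset_insert v U) (Finset.mem_insert_self v U))
  have hN := hasCliqueCohomology_zero_iff.1 ((hins.of_insert hvU).resolve_left hU1)
  exact Finset.notMem_empty u (hN ▸ mem_neighborsIn.2 ⟨hu, huv.symm⟩)

end Disconnection

/-! ### Extremal vertex sets -/

/-- A vertex set `C` of smallest possible size carrying cohomology with `c = 2`, when the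
cohomology of the induced clique complexes is confined to `p + c ≤ #U` for `c ≥ 2` and to
`#U ≤ p + c + 1` throughout. For `H` the complement of `G` these are the almost maximal finite
index conditions on `I(G)`, with `pd = p` and `C` a shortest induced cycle of `H` of
length at least 4. -/
structure IsExtremalCycle {V : Type*} [Fintype V] [LinearOrder V] (R : Type*) [CommRing R]
    (H : SimpleGraph V) (p : ℕ) (C : Finset V) : Prop where
  le_card : ∀ ⦃c U⦄, 2 ≤ c → HasCliqueCohomology R H c U → p + c ≤ #U
  card_le : ∀ ⦃c U⦄, HasCliqueCohomology R H c U → #U ≤ p + c + 1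
  hasCliqueCohomology : HasCliqueCohomology R H 2 C
  card_eq : #C = p + 2

namespace IsExtremalCycle

variable {V : Type*} [Fintype V] [LinearOrder V] {R : Type*} [CommRing R]
  {H : SimpleGraph V} {p c : ℕ} {C S U Q : Finset V} {a d e t u w x y z : V}

lemma not_hasCliqueCohomology_two (hC : IsExtremalCycle R H p C) (hU : #U < #C) :
    ¬ HasCliqueCohomology R H 2 U :=
  fun h => (hC.le_card le_rfl h).not_gt (hC.card_eq ▸ hU)

lemma hasCliqueCohomology_neighborsIn (hC : IsExtremalCycle R H p C) (hu : u ∈ C) :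
    HasCliqueCohomology R H 1 (neighborsIn H u C) :=
  (hC.hasCliqueCohomology.erase_or_neighborsIn hu).resolve_left
    (hC.not_hasCliqueCohomology_two (Finset.card_erase_lt_of_mem hu))

lemma hasCliqueCohomology_insert (hC : IsExtremalCycle R H p C) (hx : x ∉ C) (hw : w ∈ C)
    (hxw : ¬ H.Adj x w) : HasCliqueCohomology R H 2 (insert x C) := by
  refine (hC.hasCliqueCohomology.insert_or_neighborsIn hx).resolve_right
    (hC.not_hasCliqueCohomology_two (Finset.card_lt_card ?_))
  exact neighborsIn_subset.ssubset_of_mem_notMem hw fun h => hxw (mem_neighborsIn.1 h).2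

lemma neighborsIn_eq_erase (hC : IsExtremalCycle R H p C) (hc : 2 ≤ c)
    (hS : HasCliqueCohomology R H c S) (hcard : #S = p + c + 1) (hz : z ∉ S) (ht : t ∈ S)
    (hzt : ¬ H.Adj z t) :
    neighborsIn H z S = S.erase t ∧ HasCliqueCohomology R H c (S.erase t) := by
  have hN : HasCliqueCohomology R H c (neighborsIn H z S) := by
    refine (hS.insert_or_neighborsIn hz).resolve_left fun h => ?_
    have := hC.card_le h
    rw [Finset.card_insert_of_notMem hz] at this
    omega
  have hsub : neighborsIn H z S ⊆ S.erase t :=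
    Finset.subset_erase.2 ⟨neighborsIn_subset, fun h => hzt (mem_neighborsIn.1 h).2⟩
  have heq : neighborsIn H z S = S.erase t := by
    refine Finset.eq_of_subset_of_card_le hsub ?_
    have := hC.le_card hc hN
    rw [Finset.card_erase_of_mem ht]
    omega
  exact ⟨heq, heq ▸ hN⟩

section

variable (hC : IsExtremalCycle R H p C) (hx : x ∉ C) (hw : w ∈ C) (hxw : ¬ H.Adj x w)
  (hy : y ∉ C) (hu : u ∈ C) (hyu : ¬ H.Adj y u) (hxy : x ≠ y)
include hC hx hw hxw hy hu hyu hxy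

lemma neighborsIn_insert_eq :
    neighborsIn H y (insert x C) = insert x (C.erase u) ∧
      HasCliqueCohomology R H 2 (insert x (C.erase u)) := by
  rw [← Finset.erase_insert_of_ne (ne_of_mem_of_not_mem hu hx).symm]
  refine hC.neighborsIn_eq_erase le_rfl (hC.hasCliqueCohomology_insert hx hw hxw) ?_ ?_
    (Finset.mem_insert_of_mem hu) hyu
  · rw [Finset.card_insert_of_notMem hx, hC.card_eq]
  · simp [hxy.symm, hy]

lemma insert_erase : IsExtremalCycle R H p (insert x (C.erase u)) where
  le_card := hC.le_card
  card_le := hC.card_le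
  hasCliqueCohomology := (hC.neighborsIn_insert_eq hx hw hxw hy hu hyu hxy).2
  card_eq := by
    rw [Finset.card_insert_of_notMem fun h => hx (Finset.mem_of_mem_erase h),
      Finset.card_erase_add_one hu, hC.card_eq]

lemma adj_of_ne (ht : t ∈ C) (htu : t ≠ u) : H.Adj y t := by
  have : t ∈ neighborsIn H y (insert x C) := by
    rw [(hC.neighborsIn_insert_eq hx hw hxw hy hu hyu hxy).1]
    simp [ht, htu]
  exact (mem_neighborsIn.1 this).2

lemma ne_and_forall_adj : w ≠ u ∧ ∀ t ∈ C, t ≠ w → t ≠ u → H.Adj w t := by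
  have hxC {t : V} (ht : t ∈ C) (htw : t ≠ w) : H.Adj x t :=
    hC.adj_of_ne hy hu hyu hx hw hxw hxy.symm ht htw
  have hC' := hC.insert_erase hx hw hxw hy hu hyu hxy
  refine ⟨fun hwu => ?_, fun t ht htw htu => by_contra fun hwt => ?_⟩
  · refine not_hasCliqueCohomology_insert (fun t ht => ?_) 2 hC'.hasCliqueCohomology
    rw [Finset.mem_erase, ← hwu] at ht
    exact hxC ht.2 ht.1
  · refine not_hasCliqueCohomology_of_forall_adj (v := x)
      (mem_neighborsIn.2 ⟨Finset.mem_insert_self _ _, (hxC ht htw).symm⟩) (fun z hz hzx => ?_) 1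
      (hC'.hasCliqueCohomology_neighborsIn (u := t) (by simp [ht, htu]))
    obtain ⟨hz, htz⟩ := mem_neighborsIn.1 hz
    refine hxC (Finset.mem_of_mem_erase ((Finset.mem_insert.1 hz).resolve_left hzx)) ?_
    rintro rfl
    exact hwt htz.symm

end

lemma exists_notMem_forall_adj (hC : IsExtremalCycle R H p C) (hcard : 2 < #Cᶜ) :
    ∃ a ∉ C, ∀ t ∈ C, H.Adj a t := by
  by_contra! h
  obtain ⟨x, y, z, hx, hy, hz, hxy, hxz, hyz⟩ := Finset.two_lt_card_iff.1 hcard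
  rw [Finset.mem_compl] at hx hy hz
  obtain ⟨w, hw, hxw⟩ := h x hx
  obtain ⟨u, hu, hyu⟩ := h y hy
  obtain ⟨t, ht, hzt⟩ := h z hz
  have hwu := hC.ne_and_forall_adj hx hw hxw hy hu hyu hxy
  have hwt := hC.ne_and_forall_adj hx hw hxw hz ht hzt hxz
  have hut := hC.ne_and_forall_adj hy hu hyu hz ht hzt hyz
  refine not_hasCliqueCohomology_of_forall_adj hw (fun s hs hsw => ?_) 2 hC.hasCliqueCohomology
  obtain rfl | hsu := eq_or_ne s u
  · exact hwt.2 s hs hsw hut.1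
  · exact hwu.2 s hs hsw hsu

lemma not_hasCliqueCohomology_one_sdiff [Nontrivial R] (hC : IsExtremalCycle R H p C)
    (hQC : Q ⊆ C) (hQ : ¬ HasCliqueCohomology R H 1 Q) :
    ¬ HasCliqueCohomology R H 1 (C \ Q) := by
  intro h
  obtain ⟨U, hU, hUne, hUadj⟩ := h.exists_disconnection
  have hUC : U ⊆ C := hU.subset.trans Finset.sdiff_subset
  obtain ⟨v, hv, hvU⟩ := Finset.exists_of_ssubset hU
  have hunion : (U ∪ Q) ∪ (C \ U) = C := by grind
  have hinter : (C \ U) ∩ (U ∪ Q) = Q := by have := hU.subset; grind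
  have hmv := hunion.symm ▸ hC.hasCliqueCohomology
  rcases hmv.of_union (fun a ha b hb => hUadj a (by grind) b (by grind)) with h2 | h2 | h1
  · refine hC.not_hasCliqueCohomology_two (Finset.card_lt_card ?_) h2
    exact (Finset.union_subset hUC hQC).ssubset_of_mem_notMem (Finset.mem_sdiff.1 hv).1
      (by simp [hvU, (Finset.mem_sdiff.1 hv).2])
  · exact hC.not_hasCliqueCohomology_two
      (Finset.card_lt_card (Finset.sdiff_ssubset hUC hUne)) h2
  · exact hQ (hinter ▸ h1)

lemma not_adj_of_adj_of_adj [Nontrivial R] (hC : IsExtremalCycle R H p C) (ht : t ∈ C)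
    (hd : d ∈ C) (he : e ∈ C) (htd : H.Adj t d) (hte : H.Adj t e) : ¬ H.Adj d e := by
  intro hde
  have hd' : d ∈ neighborsIn H t C := mem_neighborsIn.2 ⟨hd, htd⟩
  have hN : HasCliqueCohomology R H 1 (neighborsIn H t ((C.erase d).erase t)) := by
    have heq : (neighborsIn H t C).erase d = neighborsIn H t ((C.erase d).erase t) := by
      rw [neighborsIn_erase_self]
      ext s
      simp only [mem_neighborsIn, Finset.mem_erase, and_assoc]
    rw [← heq]
    refine ((hC.hasCliqueCohomology_neighborsIn ht).erase_or_neighborsIn hd').resolve_right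
      fun h => ?_
    have he' : e ∈ neighborsIn H d (neighborsIn H t C) :=
      mem_neighborsIn.2 ⟨mem_neighborsIn.2 ⟨he, hte⟩, hde⟩
    rw [hasCliqueCohomology_zero_iff.1 h] at he'
    exact Finset.notMem_empty e he'
  rcases HasCliqueCohomology.of_neighborsIn (Finset.notMem_erase t _) hN with h2 | h1
  · rw [Finset.insert_erase (Finset.mem_erase.2 ⟨htd.ne, ht⟩)] at h2
    exact hC.not_hasCliqueCohomology_two (Finset.card_erase_lt_of_mem hd) h2
  · rw [← Finset.sdiff_singleton_eq_erase d, ← Finset.sdiff_insert] at h1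
    refine hC.not_hasCliqueCohomology_one_sdiff ?_ (not_hasCliqueCohomology_insert ?_ 1) h1
    · exact Finset.insert_subset ht (Finset.singleton_subset_iff.2 hd)
    · simpa using htd

lemma adj_of_notMem_suspension (hC : IsExtremalCycle R H p C) (ha : a ∉ C)
    (hd : d ∉ C) (haC : ∀ t ∈ C, H.Adj a t) (hdC : ∀ t ∈ C, H.Adj d t) (had : a ≠ d)
    (hadj : ¬ H.Adj a d) (hz : z ∉ insert a (insert d C)) (ht : t ∈ insert a (insert d C)) :
    H.Adj z t := by
  by_contra hzt
  have ha' : a ∉ insert d C := by simp [ha, had]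
  have hS : HasCliqueCohomology R H 3 (insert a (insert d C)) :=
    (hasCliqueCohomology_suspension_iff ha had hadj haC hdC).2 hC.hasCliqueCohomology
  have hcard : #(insert a (insert d C)) = p + 3 + 1 := by
    rw [Finset.card_insert_of_notMem ha', Finset.card_insert_of_notMem hd, hC.card_eq]
  have h := (hC.neighborsIn_eq_erase (by norm_num) hS hcard hz ht hzt).2
  rw [Finset.mem_insert, Finset.mem_insert] at ht
  rcases ht with rfl | rfl | ht
  · rw [Finset.erase_insert ha'] at h
    exact not_hasCliqueCohomology_insert hdC 3 h
  · rw [Finset.erase_insert_of_ne had, Finset.erase_insert hd] at h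
    exact not_hasCliqueCohomology_insert haC 3 h
  · rw [Finset.erase_insert_of_ne (ne_of_mem_of_not_mem ht ha).symm,
      Finset.erase_insert_of_ne (ne_of_mem_of_not_mem ht hd).symm,
      hasCliqueCohomology_suspension_iff (fun h => ha (Finset.mem_of_mem_erase h)) had hadj
        (fun s hs => haC s (Finset.mem_of_mem_erase hs))
        fun s hs => hdC s (Finset.mem_of_mem_erase hs)] at h
    exact hC.not_hasCliqueCohomology_two (Finset.card_erase_lt_of_mem ht) h

lemma adj_of_not_adj (hC : IsExtremalCycle R H p C) (hx : x ∉ C) (hy : y ∉ C) (hxy : x ≠ y)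
    (hu : u ∈ C) (hyu : ¬ H.Adj y u) (ha : a ∉ C) (haC : ∀ t ∈ C, H.Adj a t) (hax : a ≠ x)
    (hay : a ≠ y) : H.Adj a x := by
  by_contra hadj
  have haS : a ∉ insert y (insert x C) := by simp [ha, hax, hay]
  have hcard : #(insert y (insert x C)) = p + 4 := by
    rw [Finset.card_insert_of_notMem (by simp [hy, hxy.symm]), Finset.card_insert_of_notMem hx,
      hC.card_eq]
  have hN : HasCliqueCohomology R H 2 (neighborsIn H a (insert y (insert x C))) := by
    by_cases hay : H.Adj a y
    · rw [neighborsIn_insert_of_adj hay, neighborsIn_insert_of_not_adj hadj,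
        neighborsIn_eq_self haC]
      exact hC.hasCliqueCohomology_insert hy hu hyu
    · rw [neighborsIn_insert_of_not_adj hay, neighborsIn_insert_of_not_adj hadj,
        neighborsIn_eq_self haC]
      exact hC.hasCliqueCohomology
  rcases HasCliqueCohomology.of_neighborsIn haS hN with h | h
  · have := hC.card_le h
    rw [Finset.card_insert_of_notMem haS] at this
    omega
  · have := hC.card_le h
    omega

lemma card_compl_neighborsIn_add_card_le (hC : IsExtremalCycle R H p C) (hax : a ≠ x)
    (hadj : ¬ H.Adj a x) (ha : ∀ w, w ≠ a → w ≠ x → H.Adj a w)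
    (hU : U ⊆ neighborsIn H x Finset.univ) (h : HasCliqueCohomology R H c U) :
    #(neighborsIn H x Finset.univ)ᶜ + #U ≤ p + c + 2 := by
  set N := neighborsIn H x Finset.univ with hN
  have hxN : x ∉ N := fun h => (mem_neighborsIn.1 h).2.ne rfl
  have haN : a ∉ N := fun h => hadj (mem_neighborsIn.1 h).2.symm
  have hW : neighborsIn H x ((Nᶜ ∪ U).erase x) = U := by
    rw [neighborsIn_erase_self]
    ext y
    have hy : y ∈ N ↔ H.Adj x y := by simp [hN, mem_neighborsIn]
    have := @hU y
    rw [mem_neighborsIn, Finset.mem_union, Finset.mem_compl]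
    tauto
  rcases HasCliqueCohomology.of_neighborsIn (Finset.notMem_erase x _) (hW.symm ▸ h) with h | h
  · rw [Finset.insert_erase (by simp [hxN])] at h
    rw [← Finset.card_union_of_disjoint (disjoint_compl_left.mono_right hU)]
    exact hC.card_le h
  · exact (not_hasCliqueCohomology_of_forall_adj (v := a) (by simp [hax, haN])
      (fun w hw hwa => ha w hwa (Finset.ne_of_mem_erase hw)) _ h).elim

section NoCone

variable (hC : IsExtremalCycle R H p C) (hH : ∀ v, ∃ w ≠ v, ¬ H.Adj v w)
  (hcard : p + 5 ≤ Fintype.card V)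
include hC hH hcard

lemma adj_of_forall_adj (ha : a ∉ C) (hd : d ∉ C) (haC : ∀ t ∈ C, H.Adj a t)
    (hdC : ∀ t ∈ C, H.Adj d t) (had : a ≠ d) : H.Adj a d := by
  by_contra hadj
  set S := insert a (insert d C) with hS
  have hcardS : #S = p + 4 := by
    rw [hS, Finset.card_insert_of_notMem (by simp [ha, had]), Finset.card_insert_of_notMem hd,
      hC.card_eq]
  have hjoin {z : V} (hz : z ∉ S) : ∀ t ∈ S, H.Adj z t := fun t =>
    hC.adj_of_notMem_suspension ha hd haC hdC had hadj hz
  obtain ⟨z, hz⟩ : ∃ z, z ∉ S := by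
    by_contra! h
    rw [Finset.eq_univ_iff_forall.2 h, Finset.card_univ] at hcardS
    omega
  obtain ⟨z', hne, hzz'⟩ := hH z
  have hz' : z' ∉ S := fun h => hzz' (hjoin hz z' h)
  have hcohom : HasCliqueCohomology R H 4 (insert z (insert z' S)) := by
    rw [hasCliqueCohomology_suspension_iff hz hne.symm hzz' (hjoin hz) (hjoin hz'),
      hasCliqueCohomology_suspension_iff ha had hadj haC hdC]
    exact hC.hasCliqueCohomology
  have := hC.card_le hcohom
  rw [Finset.card_insert_of_notMem (by simp [hz, hne.symm]), Finset.card_insert_of_notMem hz']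
    at this
  omega

lemma exists_not_adj (ha : a ∉ C) (haC : ∀ t ∈ C, H.Adj a t) :
    ∃ x ∉ C, x ≠ a ∧ ¬ H.Adj a x ∧ ∃ w ∈ C, ¬ H.Adj x w := by
  obtain ⟨x, hxa, hax⟩ := hH a
  have hxC : x ∉ C := fun h => hax (haC x h)
  refine ⟨x, hxC, hxa, hax, ?_⟩
  by_contra! h
  exact hax (hC.adj_of_forall_adj hH hcard ha hxC haC h hxa.symm)

section UniqueException

variable (hjoin : ∀ a ∉ C, a ≠ x → ∀ t ∈ C, H.Adj a t)
include hjoin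

lemma adj_iff_ne (ha : a ∉ C) (hax : a ≠ x) (hw : w ≠ a) : H.Adj a w ↔ w ≠ x := by
  constructor
  · rintro haw rfl
    obtain ⟨z, hz, -, haz, s, hs, hzs⟩ := hC.exists_not_adj hH hcard ha (hjoin a ha hax)
    obtain rfl : z = w := by_contra fun hzw => hzs (hjoin z hz hzw s hs)
    exact haz haw
  · intro hwx
    by_cases hwC : w ∈ C
    · exact hjoin a ha hax w hwC
    · exact hC.adj_of_forall_adj hH hcard ha hwC (hjoin a ha hax) (hjoin w hwC hwx) hw.symm

lemma neighborsIn_univ_subset : neighborsIn H x Finset.univ ⊆ C := by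
  intro y hy
  have hxy := (mem_neighborsIn.1 hy).2
  by_contra hyC
  exact (hC.adj_iff_ne hH hcard hjoin hyC hxy.ne' hxy.ne).1 hxy.symm rfl

variable [Nontrivial R] (ha : a ∉ C) (hax : a ≠ x) (hw : w ∈ C)
include ha hax hw

lemma isClique_neighborsIn_univ (hxw : ¬ H.Adj x w) :
    H.IsClique (neighborsIn H x Finset.univ : Set V) := by
  intro u hu v hv huv
  by_contra hadj
  have hsub := hC.neighborsIn_univ_subset hH hcard hjoin
  have hNC : #(neighborsIn H x Finset.univ) < #C :=
    Finset.card_lt_card (hsub.ssubset_of_mem_notMem hw fun h => hxw (mem_neighborsIn.1 h).2)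
  have ha_adj {w : V} (hwa : w ≠ a) : H.Adj a w ↔ w ≠ x :=
    hC.adj_iff_ne hH hcard hjoin ha hax hwa
  have hnot : ¬ H.Adj a x := fun h => (ha_adj hax.symm).1 h rfl
  have huvN : {u, v} ⊆ neighborsIn H x Finset.univ :=
    Finset.insert_subset hu (Finset.singleton_subset_iff.2 hv)
  have hxuv : ∀ t ∈ ({u, v} : Finset V), H.Adj x t := fun t ht => (mem_neighborsIn.1 (huvN ht)).2
  have hauv : ∀ t ∈ ({u, v} : Finset V), H.Adj a t := fun t ht =>
    hjoin a ha hax t (hsub (huvN ht))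
  have hpair : HasCliqueCohomology R H 1 {u, v} := hasCliqueCohomology_one_pair huv hadj
  have hbound := hC.card_compl_neighborsIn_add_card_le hax hnot
    (fun w hwa => (ha_adj hwa).2) huvN hpair
  have hfour : HasCliqueCohomology R H 2 {a, x, u, v} :=
    (hasCliqueCohomology_suspension_iff (fun h => (hauv a h).ne rfl) hax hnot hauv hxuv).2 hpair
  have := hC.le_card le_rfl hfour
  have := Finset.card_le_four (a := a) (b := x) (c := u) (d := v)
  rw [Finset.card_pair huv] at hbound
  have := Finset.card_add_card_compl (neighborsIn H x Finset.univ)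
  have := hC.card_eq
  omega

lemma adj_of_forall_ne_adj : H.Adj x w := by
  by_contra hxw
  have hsub := hC.neighborsIn_univ_subset hH hcard hjoin
  have hclique := hC.isClique_neighborsIn_univ hH hcard hjoin ha hax hw hxw
  have ha_adj {w : V} (hwa : w ≠ a) : H.Adj a w ↔ w ≠ x :=
    hC.adj_iff_ne hH hcard hjoin ha hax hwa
  have hbound := hC.card_compl_neighborsIn_add_card_le hax
    (fun h => (ha_adj hax.symm).1 h rfl) (fun w hwa => (ha_adj hwa).2)
    (Finset.empty_subset _) (hasCliqueCohomology_zero_iff.2 rfl)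
  rw [Finset.card_empty] at hbound
  have := Finset.card_add_card_compl (neighborsIn H x Finset.univ)
  obtain ⟨t, d, e, ht, hd, he, htd, hte, hde⟩ :=
    Finset.two_lt_card_iff.1 (show 2 < #(neighborsIn H x Finset.univ) by omega)
  exact hC.not_adj_of_adj_of_adj (hsub ht) (hsub hd) (hsub he) (hclique ht hd htd)
    (hclique ht he hte) (hclique hd he hde)

end UniqueException

end NoCone

lemma card_univ_le [Nontrivial R] (hC : IsExtremalCycle R H p C)
    (hH : ∀ v, ∃ w ≠ v, ¬ H.Adj v w) : Fintype.card V ≤ p + 4 := by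
  by_contra! hcard
  have hcompl : 2 < #Cᶜ := by
    rw [Finset.card_compl, hC.card_eq]
    omega
  obtain ⟨a, ha, haC⟩ := hC.exists_notMem_forall_adj hcompl
  obtain ⟨x, hx, hxa, hax, w, hw, hxw⟩ := hC.exists_not_adj hH hcard ha haC
  refine hxw (hC.adj_of_forall_ne_adj hH hcard (fun y hy hyx t ht => ?_) ha hxa.symm hw)
  by_contra hyt
  have hay : a ≠ y := fun h => hyt (h ▸ haC t ht)
  exact hax (hC.adj_of_not_adj hx hy hyx.symm ht hyt ha haC hxa.symm hay)

lemma le_card_univ [Nontrivial R] (hC : IsExtremalCycle R H p C)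
    (hU : HasCliqueCohomology R H c U) (hcard : #U = p + c + 1) : p + 3 ≤ Fintype.card V := by
  by_contra! hlt
  have hCuniv := Finset.card_le_univ C
  have hUuniv := Finset.card_le_univ U
  have hCcard := hC.card_eq
  have hc : c ≠ 0 := by
    rintro rfl
    rw [hasCliqueCohomology_zero_iff.1 hU, Finset.card_empty] at hcard
    omega
  obtain rfl : c = 1 := by omega
  have hUC : U = C := by
    rw [(Finset.card_eq_iff_eq_univ C).1 (by omega), (Finset.card_eq_iff_eq_univ U).1 (by omega)]
  refine hC.not_hasCliqueCohomology_one_sdiff (Finset.empty_subset C)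
    (fun h => one_ne_zero (hasCliqueCohomology_empty_iff.1 h)) ?_
  rwa [Finset.sdiff_empty, ← hUC]

end IsExtremalCycle

section Extremal

variable {V : Type*} [Fintype V] [LinearOrder V] {R : Type*} [CommRing R] {H : SimpleGraph V}
  {p c : ℕ} {C : Finset V}

lemma isExtremalCycle_of_card_eq
    (hle : ∀ ⦃c U⦄, 2 ≤ c → HasCliqueCohomology R H c U → p + c ≤ #U)
    (hge : ∀ ⦃c U⦄, HasCliqueCohomology R H c U → #U ≤ p + c + 1)
    (hc : 2 ≤ c) (h : HasCliqueCohomology R H c C) (hcard : #C = p + c) :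
    IsExtremalCycle R H p C := by
  suffices c = 2 by subst this; exact ⟨hle, hge, h, hcard⟩
  by_contra hne
  obtain ⟨b, rfl⟩ : ∃ b, c = b + 1 := ⟨c - 1, by omega⟩
  obtain ⟨v, hv⟩ : C.Nonempty := Finset.card_pos.1 (by omega)
  have hN : HasCliqueCohomology R H b (neighborsIn H v C) := by
    refine (h.erase_or_neighborsIn hv).resolve_left fun h => ?_
    have := hle hc h
    rw [Finset.card_erase_of_mem hv] at this
    omega
  have hsub : neighborsIn H v C ⊆ C.erase v :=
    Finset.subset_erase.2 ⟨neighborsIn_subset, fun h => (mem_neighborsIn.1 h).2.ne rfl⟩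
  have heq : neighborsIn H v C = C.erase v := by
    refine Finset.eq_of_subset_of_card_le hsub ?_
    have := hle (by omega) hN
    rw [Finset.card_erase_of_mem hv]
    omega
  refine not_hasCliqueCohomology_of_forall_adj hv (fun w hw hwv => ?_) _ h
  exact (mem_neighborsIn.1 (heq ▸ Finset.mem_erase.2 ⟨hwv, hw⟩)).2

end Extremal

/-! ### Betti numbers from the Taylor complex -/

section Taylor

variable {K : Type} [Field K] {r n : ℕ} (E : Fin r → Finset (Fin n))

/-- The exponent vectors of the squarefree monomials with supports `E`. -/
def exponents (k : Fin r) (x : Fin n) : ℕ := if x ∈ E k then 1 else 0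

lemma mlcm_exponents (S : Finset (Fin r)) (x : Fin n) :
    mlcm (exponents E) S x = if x ∈ S.biUnion E then 1 else 0 := by
  simp only [mlcm, exponents]
  induction S using Finset.induction_on with
  | empty => simp
  | insert k S _ ih =>
    rw [Finset.sup_insert, ih, Finset.biUnion_insert]
    by_cases hxk : x ∈ E k <;> by_cases hxS : x ∈ S.biUnion E <;>
      simp only [Finset.mem_union, hxk, hxS] <;> rfl

lemma mlcm_exponents_inj {S T : Finset (Fin r)} :
    mlcm (exponents E) S = mlcm (exponents E) T ↔ S.biUnion E = T.biUnion E := by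
  refine ⟨fun h => Finset.ext fun x => ?_, fun h => funext fun x => by
    rw [mlcm_exponents, mlcm_exponents, h]⟩
  have hx := congrFun h x
  rw [mlcm_exponents, mlcm_exponents] at hx
  split_ifs at hx <;> simp_all only

lemma sum_mlcm_exponents (S : Finset (Fin r)) :
    ∑ x, mlcm (exponents E) S x = #(S.biUnion E) := by
  simp only [mlcm_exponents, Finset.sum_ite_mem, Finset.univ_inter, Finset.card_eq_sum_ones]

lemma incidenceSign_eq_of_insert {a : Fin r} {T : Finset (Fin r)} :
    (-1 : K) ^ #{b ∈ insert a T | b < a} = incidenceSign K a T := by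
  rw [incidenceSign, Finset.filter_insert, if_neg (lt_irrefl a)]

lemma bdT_exponents_single (S : Finset (Fin r)) (c : K) (T : Finset (Fin r)) :
    bdT K (exponents E) (Finsupp.single S c) T =
      ∑ k ∈ S, if (S.erase k).biUnion E = S.biUnion E ∧ S.erase k = T
        then (-1) ^ #{b ∈ S | b < k} * c else 0 := by
  simp only [bdT, Finsupp.lsum_single, LinearMap.toSpanSingleton_apply, Finsupp.smul_apply,
    Finsupp.finsetSum_apply, mlcm_exponents_inj, Finset.smul_sum, smul_eq_mul]
  refine Finset.sum_congr rfl fun k _ => ?_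
  rw [ite_and]
  split_ifs with hcov hk
  · rw [Finsupp.smul_apply, hk, Finsupp.single_eq_same, smul_eq_mul, mul_one, mul_comm]
  · rw [Finsupp.smul_apply, Finsupp.single_eq_of_ne' hk, smul_zero, mul_zero]
  · rw [Finsupp.zero_apply, mul_zero]

lemma bdT_exponents_single_insert {a : Fin r} {T : Finset (Fin r)} (ha : a ∉ T) (c : K) :
    bdT K (exponents E) (Finsupp.single (insert a T) c) T =
      if T.biUnion E = (insert a T).biUnion E then incidenceSign K a T * c else 0 := by
  rw [bdT_exponents_single, Finset.sum_eq_single_of_mem a (Finset.mem_insert_self a T)]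
  · rw [Finset.erase_insert ha, incidenceSign_eq_of_insert]
    simp only [and_true]
  · refine fun b _ hba => if_neg ?_
    rintro ⟨-, h⟩
    exact ha (h ▸ Finset.mem_erase.2 ⟨hba.symm, Finset.mem_insert_self a T⟩)

lemma bdT_exponents_single_eq_zero {S T : Finset (Fin r)} (h : ∀ a ∉ T, insert a T ≠ S) (c : K) :
    bdT K (exponents E) (Finsupp.single S c) T = 0 := by
  rw [bdT_exponents_single]
  refine Finset.sum_eq_zero fun k hk => if_neg ?_
  rintro ⟨-, rfl⟩
  exact h k (Finset.notMem_erase k S) (Finset.insert_erase hk)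

lemma bdT_exponents_apply (f : Finset (Fin r) →₀ K) (T : Finset (Fin r)) :
    bdT K (exponents E) f T = boundary K ((exactCovers E (T.biUnion E)).indicator f) T := by
  classical
  induction f using Finsupp.induction_linear with
  | zero => simp only [map_zero, Finsupp.coe_zero, Set.indicator_zero', Pi.zero_apply]
  | add f g hf hg =>
    rw [map_add, Finsupp.add_apply, hf, hg, Finsupp.coe_add, Set.indicator_add', map_add,
      Pi.add_apply]
  | single S c =>
    have hzero {a : Fin r} (h : insert a T ≠ S) :
        (exactCovers E (T.biUnion E)).indicator (Finsupp.single S c) (insert a T) = 0 := by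
      rw [Set.indicator_apply, Finsupp.single_eq_of_ne h, ite_self]
    by_cases hS : ∃ a ∉ T, insert a T = S
    · obtain ⟨a, ha, rfl⟩ := hS
      rw [bdT_exponents_single_insert E ha, boundary_apply_of_forall_ne ha fun b hb hba =>
          hzero fun h => hba ((Finset.insert_inj hb).1 h),
        Set.indicator_apply, Finsupp.single_eq_same, mul_ite, mul_zero]
      exact if_congr eq_comm rfl rfl
    · push Not at hS
      rw [bdT_exponents_single_eq_zero E hS]
      by_contra h
      obtain ⟨a, ha, h⟩ := exists_ne_zero_of_boundary_ne_zero (Ne.symm h)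
      exact h (hzero (hS a ha))

lemma mem_strand_exponents_iff {p j : ℕ} {f : Finset (Fin r) →₀ K} :
    f ∈ strand K (exponents E) p j ↔ ∀ S, f S ≠ 0 → #S = p ∧ #(S.biUnion E) = j := by
  have hstrand : strand K (exponents E) p j =
      Finsupp.supported K K {S | #S = p ∧ #(S.biUnion E) = j} := by
    rw [Finsupp.supported_eq_span_single, strand]
    congr 1
    ext f
    simp only [sum_mlcm_exponents, Set.mem_ofPred_eq, Set.mem_image, and_assoc, eq_comm]
  rw [hstrand, Finsupp.mem_supported]
  exact forall_congr' fun S => by rw [Finset.mem_coe, Finsupp.mem_support_iff]; rfl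

lemma indicator_mem_chains_of_mem_strand {p j : ℕ} {f : Finset (Fin r) →₀ K}
    (hf : f ∈ strand K (exponents E) p j) (W : Finset (Fin n)) :
    (exactCovers E W).indicator f ∈ chains K (exactCovers E W) p := by
  intro S hS
  have hSW := Set.mem_of_indicator_ne_zero hS
  rw [Set.indicator_of_mem hSW] at hS
  exact ⟨hSW, by rw [((mem_strand_exponents_iff E).1 hf S hS).1]⟩

lemma finrank_sub_finrank_inf_eq_zero_iff {M : Type*} [AddCommGroup M] [Module K M]
    [FiniteDimensional K M] (A B : Submodule K M) :
    Module.finrank K A - Module.finrank K ↥(B ⊓ A) = 0 ↔ A ≤ B := by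
  constructor
  · intro h
    exact inf_eq_right.1
      (Submodule.eq_of_le_of_finrank_le inf_le_right (Nat.sub_eq_zero_iff_le.1 h))
  · intro h
    rw [inf_eq_right.2 h, Nat.sub_self]

lemma acyclic_exactCovers_of_le {p : ℕ} {W : Finset (Fin n)}
    (h : strand K (exponents E) p #W ⊓ LinearMap.ker (bdT K (exponents E)) ≤
      (strand K (exponents E) (p + 1) #W).map (bdT K (exponents E))) :
    Acyclic K (exactCovers E W) p := by
  intro f hf hcycle
  have hstrand : Finsupp.equivFunOnFinite.symm f ∈ strand K (exponents E) p #W := by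
    refine (mem_strand_exponents_iff E).2 fun S hS => ?_
    obtain ⟨hSW, hcard⟩ := hf S hS
    exact ⟨Nat.cast_injective hcard, congrArg Finset.card hSW⟩
  have hker : bdT K (exponents E) (Finsupp.equivFunOnFinite.symm f) = 0 := by
    ext T
    rw [bdT_exponents_apply, Finsupp.coe_equivFunOnFinite_symm, Finsupp.zero_apply]
    by_contra h
    obtain ⟨a, -, ha⟩ := exists_ne_zero_of_boundary_ne_zero h
    have haT := Set.mem_of_indicator_ne_zero ha
    rw [Set.indicator_of_mem haT] at ha
    have hTW : T.biUnion E = W := haT.symm.trans (hf _ ha).1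
    rw [hTW, Set.indicator_eq_self.2 fun S hS => (hf S hS).1, hcycle T hTW] at h
    exact h rfl
  obtain ⟨e, he, hef⟩ := h ⟨hstrand, hker⟩
  refine ⟨_, by exact_mod_cast indicator_mem_chains_of_mem_strand E he W, fun T hT => ?_⟩
  have hTW : T.biUnion E = W := hT
  rw [← hTW, ← bdT_exponents_apply, hef, Finsupp.coe_equivFunOnFinite_symm]

lemma strand_inf_ker_le_map {p j : ℕ}
    (h : ∀ W : Finset (Fin n), #W = j → Acyclic K (exactCovers E W) p) :
    strand K (exponents E) p j ⊓ LinearMap.ker (bdT K (exponents E)) ≤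
      (strand K (exponents E) (p + 1) j).map (bdT K (exponents E)) := by
  rintro f ⟨hf, hker⟩
  have hprim (W : Finset (Fin n)) : ∃ e ∈ chains K (exactCovers E W) (p + 1),
      (e ≠ 0 → #W = j) ∧ ∀ T ∈ exactCovers E W, boundary K e T = f T := by
    by_cases hW : #W = j
    · obtain ⟨e, he, hef⟩ := h W hW _ (indicator_mem_chains_of_mem_strand E hf W) fun T hT => by
        have hTW : T.biUnion E = W := hT
        rw [← hTW, ← bdT_exponents_apply, LinearMap.mem_ker.1 hker, Finsupp.zero_apply]
      exact ⟨e, he, fun _ => hW, fun T hT => by rw [hef T hT, Set.indicator_of_mem hT]⟩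
    · refine ⟨0, zero_mem _, fun h => (h rfl).elim, fun T hT => ?_⟩
      rw [map_zero, Pi.zero_apply, eq_comm]
      by_contra hfT
      exact hW (hT ▸ ((mem_strand_exponents_iff E).1 hf T hfT).2)
  choose e he hej hef using hprim
  refine ⟨Finsupp.equivFunOnFinite.symm fun S => e (S.biUnion E) S, ?_, ?_⟩
  · refine (mem_strand_exponents_iff E).2 fun S hS => ⟨?_, hej _ fun h => hS (congrFun h S)⟩
    exact_mod_cast (he _ S hS).2
  · ext T
    rw [bdT_exponents_apply, ← hef _ T rfl]
    refine boundary_congr fun a _ => ?_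
    by_cases ha : insert a T ∈ exactCovers E (T.biUnion E)
    · have hcov : (insert a T).biUnion E = T.biUnion E := ha
      rw [Set.indicator_of_mem ha, Finsupp.equivFunOnFinite_symm_apply_apply, hcov]
    · rw [Set.indicator_of_notMem ha, eq_zero_of_notMem (he _) ha]

theorem torRank_exponents_eq_zero_iff {p j : ℕ} :
    torRank K (exponents E) p j = 0 ↔
      ∀ W : Finset (Fin n), #W = j → Acyclic K (exactCovers E W) p := by
  rw [torRank, finrank_sub_finrank_inf_eq_zero_iff]
  exact ⟨fun h W hW => acyclic_exactCovers_of_le E (hW ▸ h), strand_inf_ker_le_map E⟩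

end Taylor

section EdgeIdeal

variable {K : Type} [Field K] {n : ℕ} {G : SimpleGraph (Fin n)} {c i j : ℕ} {W : Finset (Fin n)}

variable (G) in
/-- The end points of the edges of `G`, in the enumeration of the edges used by `edgeGens`. -/
noncomputable def edgeVertices (k : Fin #(edgeFins G)) : Finset (Fin n) :=
  ((edgeFins G).equivFin.symm k : Sym2 (Fin n)).toFinset

lemma exponents_edgeVertices : exponents (edgeVertices G) = edgeGens G := by
  funext k x
  simp only [exponents, edgeVertices, edgeGens, Sym2.mem_toFinset]

lemma transversals_edgeVertices (W : Finset (Fin n)) :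
    transversals (edgeVertices G) W = cliqueComplements Gᶜ W := by
  ext s
  simp only [transversals, cliqueComplements, Set.mem_ofPred_eq]
  refine and_congr (by rw [compl_le_iff_compl_le]) ⟨fun h u hu v hv huv => ?_, fun h k => ?_⟩
  · refine (SimpleGraph.compl_adj G u v).2 ⟨huv, fun hadj => ?_⟩
    have hmem : s(u, v) ∈ edgeFins G := by simpa [edgeFins] using hadj
    obtain ⟨x, hx, hxs⟩ := h ((edgeFins G).equivFin ⟨_, hmem⟩)
    rw [edgeVertices, Equiv.symm_apply_apply, Sym2.mem_toFinset, Sym2.mem_iff] at hx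
    obtain rfl | rfl := hx
    · simp [hxs] at hu
    · simp [hxs] at hv
  · obtain ⟨⟨e, he⟩, hk⟩ : ∃ e, e = (edgeFins G).equivFin.symm k := ⟨_, rfl⟩
    simp only [edgeVertices, ← hk, Sym2.mem_toFinset]
    induction e with
    | _ u v =>
      have hadj : G.Adj u v := by simpa [edgeFins] using he
      by_contra! hs
      exact (h (by simpa using hs u (Sym2.mem_mk_left u v))
        (by simpa using hs v (Sym2.mem_mk_right u v)) hadj.ne).2 hadj

theorem gBetti_ne_zero_iff : gBetti K G i j ≠ 0 ↔
    ∃ W c, #W = j ∧ i + 1 + c = j ∧ HasCliqueCohomology K Gᶜ c W := by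
  rw [gBetti, betti, ← exponents_edgeVertices, Ne, torRank_exponents_eq_zero_iff]
  push Not
  simp only [acyclic_exactCovers_iff, transversals_edgeVertices]
  refine exists_congr fun W => ?_
  have hcard := Finset.card_add_card_compl W
  constructor
  · rintro ⟨rfl, h⟩
    obtain ⟨s, -, hs⟩ : ∃ s ∈ cliqueComplements Gᶜ W, (#s : ℤ) = (i + 1 : ℕ) + #Wᶜ := by
      by_contra! hs
      exact h (acyclic_of_forall_card_ne hs)
    have := Finset.card_le_univ s
    obtain ⟨c, hc⟩ : ∃ c, i + 1 + c = #W := ⟨#W - (i + 1), by omega⟩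
    refine ⟨c, rfl, hc, ?_⟩
    rwa [HasCliqueCohomology,
      show (Fintype.card (Fin n) : ℤ) - c = (i + 1 : ℕ) + #Wᶜ by omega]
  · rintro ⟨c, rfl, hc, h⟩
    refine ⟨rfl, ?_⟩
    rwa [HasCliqueCohomology,
      show (Fintype.card (Fin n) : ℤ) - c = (i + 1 : ℕ) + #Wᶜ by omega] at h

lemma HasCliqueCohomology.exists_gBetti_ne_zero (h : HasCliqueCohomology K Gᶜ c W)
    (hW : W.Nonempty) : ∃ i, i + 1 + c = #W ∧ gBetti K G i #W ≠ 0 := by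
  obtain ⟨i, hi⟩ : ∃ i, i + 1 + c = #W := ⟨#W - (c + 1), by have := h.lt_card hW; omega⟩
  exact ⟨i, hi, gBetti_ne_zero_iff.2 ⟨W, c, rfl, hi, h⟩⟩

variable (K G) in
lemma bddAbove_gBetti_ne_zero : BddAbove {i | ∃ j, gBetti K G i j ≠ 0} := by
  refine ⟨n, fun i ⟨j, hij⟩ => ?_⟩
  obtain ⟨W, c, rfl, hc, -⟩ := gBetti_ne_zero_iff.1 hij
  have := Finset.card_le_univ W
  rw [Fintype.card_fin] at this
  omega

namespace AMFI

lemma gPd_le (h : AMFI K G) (hij : i + 2 < j) (hne : gBetti K G i j ≠ 0) : gPd K G ≤ i + 1 := by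
  have hindex : gIndex K G ≤ i := sInf_le ⟨i, j, rfl, hij, hne⟩
  have : gIndex K G + 1 ≤ i + 1 := by gcongr
  rw [h] at this
  exact_mod_cast this

lemma exists_gBetti_ne_zero (h : AMFI K G) :
    ∃ i j, i + 2 < j ∧ gBetti K G i j ≠ 0 ∧ gPd K G = i + 1 := by
  have hne : {N : ℕ∞ | ∃ i j : ℕ, N = i ∧ i + 2 < j ∧ gBetti K G i j ≠ 0}.Nonempty := by
    rw [Set.nonempty_iff_ne_empty]
    intro hempty
    rw [AMFI, gIndex, hempty, sInf_empty] at h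
    exact ENat.natCast_ne_top _ h.symm
  obtain ⟨i, j, hi, hij, hb⟩ := csInf_mem hne
  have hindex : gIndex K G = i := hi
  refine ⟨i, j, hij, hb, ?_⟩
  rw [AMFI, hindex] at h
  exact_mod_cast h.symm

lemma exists_gBetti_gPd_ne_zero (h : AMFI K G) : ∃ j, gBetti K G (gPd K G) j ≠ 0 := by
  obtain ⟨i, j, -, hij, -⟩ := h.exists_gBetti_ne_zero
  exact Nat.sSup_mem (s := {i | ∃ j, gBetti K G i j ≠ 0}) ⟨i, j, hij⟩ (bddAbove_gBetti_ne_zero K G)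

lemma exists_isExtremalCycle (h : AMFI K G) : ∃ C, IsExtremalCycle K Gᶜ (gPd K G) C := by
  obtain ⟨i, j, hij, hb, hpd⟩ := h.exists_gBetti_ne_zero
  obtain ⟨C, c, hC, hc, hcohom⟩ := gBetti_ne_zero_iff.1 hb
  refine ⟨C, isExtremalCycle_of_card_eq (fun c U hc hU => ?_) (fun c U hU => ?_)
    (c := c) (by omega) hcohom (by omega)⟩
  · have hne : U.Nonempty := by
      rw [Finset.nonempty_iff_ne_empty]
      rintro rfl
      rw [hasCliqueCohomology_empty_iff.1 hU] at hc
      omega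
    obtain ⟨i, hi, hb⟩ := hU.exists_gBetti_ne_zero hne
    have := h.gPd_le (by omega) hb
    omega
  · obtain rfl | hne := U.eq_empty_or_nonempty
    · simp
    · obtain ⟨i, hi, hb⟩ := hU.exists_gBetti_ne_zero hne
      have : i ≤ gPd K G := le_csSup (bddAbove_gBetti_ne_zero K G) ⟨_, hb⟩
      omega

end AMFI

end EdgeIdeal

end EP

/-- If `G` has no isolated vertex and `I(G)` has almost maximal finite
index, then `3 ≤ depth(I(G)) ≤ 4`, where by the Auslander–Buchsbaum formula
`depth(I(G)) = n − pd(I(G))`. -/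
theorem statement10 (K : Type) [Field K] (n : ℕ) (G : SimpleGraph (Fin n))
    (hiso : ∀ v : Fin n, ∃ w, G.Adj v w) (h : EP.AMFI K G) :
    3 ≤ n - EP.gPd K G ∧ n - EP.gPd K G ≤ 4 := by
  obtain ⟨C, hC⟩ := h.exists_isExtremalCycle
  have hcone : ∀ v, ∃ w ≠ v, ¬ Gᶜ.Adj v w := fun v =>
    (hiso v).imp fun w hvw => ⟨hvw.ne', fun hc => hc.2 hvw⟩
  have hupper := hC.card_univ_le hcone
  obtain ⟨j, hj⟩ := h.exists_gBetti_gPd_ne_zero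
  obtain ⟨W, c, hW, hc, hcohom⟩ := EP.gBetti_ne_zero_iff.1 hj
  have hlower := hC.le_card_univ hcohom (by omega)
  rw [Fintype.card_fin] at hupper hlower
  omega
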